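/- arXiv:2103.13857 — 9 statements merged into one kernel-verified Lean document; each statement's English description precedes it below -/
import Mathlib

section
/- Let n ≥ 2, let f : S^{n-1} → ℝ satisfy f(ω) ≥ f₀ for all ω, where f₀ > 0, and suppose f is geodesically L-Lipschitz. Then the domain Ω_f is star-shaped with respect to the ball B_ε(0) with ε = f₀²/(Lπ + f₀); that is, for every y ∈ ℝⁿ with ‖y‖ < ε and every x ∈ Ω_f, the segment [y,x] = {y + t(x−y) : t ∈ [0,1]} is contained in Ω_f. -/
open Real
open scoped RealInnerProductSpace

/-- The star-shaped domain associated to a positive function on the unit sphere: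
`Ω_f = {x : x = 0, or x ≠ 0 and ‖x‖ < f(x/‖x‖)}`. -/
def Omega {n : ℕ} (f : EuclideanSpace ℝ (Fin n) → ℝ) : Set (EuclideanSpace ℝ (Fin n)) :=
  {x | x = 0 ∨ (x ≠ 0 ∧ ‖x‖ < f (‖x‖⁻¹ • x))}

theorem arccos_aux {E : Type*} [NormedAddCommGroup E] [InnerProductSpace ℝ E]
    (z w ω : E) (s : ℝ) (hs : 0 ≤ s) (hω : ‖ω‖ = 1) (hz : z = w + s • ω) (hwz : ‖w‖ < ‖z‖)
    (hz0 : 0 < ‖z‖) :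
    Real.arccos ⟪ω, ‖z‖⁻¹ • z⟫ ≤ π / 2 * (‖w‖ / ‖z‖) := by
  have hωω : ⟪ω, ω⟫ = (1 : ℝ) := by rw [real_inner_self_eq_norm_sq, hω]; norm_num
  have hc : ⟪ω, ‖z‖⁻¹ • z⟫ = ⟪ω, z⟫ / ‖z‖ := by
    rw [real_inner_smul_right]; field_simp
  have hi : ⟪ω, z⟫ = ⟪ω, w⟫ + s := by
    rw [hz, inner_add_right, real_inner_smul_right, hωω, mul_one]
  have hn : ‖z‖ ^ 2 = ‖w‖ ^ 2 + 2 * s * ⟪ω, w⟫ + s ^ 2 := by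
    rw [hz, norm_add_sq_real, real_inner_smul_right, norm_smul, hω, real_inner_comm]
    simp only [Real.norm_eq_abs, mul_one, sq_abs]; ring
  have hpos : 0 ≤ ⟪ω, z⟫ := by
    rw [hi]
    have h2 : ‖w‖ ^ 2 < ‖z‖ ^ 2 := by gcongr
    by_contra hneg
    push Not at hneg
    nlinarith
  rw [hc]
  set c := ⟪ω, z⟫ / ‖z‖ with hcdef
  have hc0 : 0 ≤ c := by positivity
  have hsin : Real.sin (Real.arccos c) ≤ ‖w‖ / ‖z‖ := by
    rw [Real.sin_arccos]
    apply Real.sqrt_le_iff.2 ⟨by positivity, ?_⟩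
    rw [hcdef, div_pow, div_pow, sub_le_iff_le_add, ← add_div, le_div_iff₀ (by positivity), hi]
    nlinarith [sq_nonneg ⟪ω, w⟫]
  have hj := Real.mul_le_sin (Real.arccos_nonneg c) (Real.arccos_le_pi_div_two.2 hc0)
  have hpi := Real.pi_pos
  calc Real.arccos c = π / 2 * (2 / π * Real.arccos c) := by field_simp
    _ ≤ _ := by gcongr; exact hj.trans hsin

/-- If `f ≥ f₀ > 0` on the unit sphere and `f` is geodesically `L`-Lipschitz, then
`Ω_f` is star-shaped with respect to the ball `B_ε(0)` with `ε = f₀²/(Lπ + f₀)`: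
every segment from a point of `B_ε(0)` to a point of `Ω_f` stays in `Ω_f`. -/
theorem omega_starShaped_wrt_ball
    {n : ℕ} (hn : 2 ≤ n) (f : EuclideanSpace ℝ (Fin n) → ℝ) (f₀ L : ℝ) (hf₀ : 0 < f₀)
    (hlow : ∀ ω : EuclideanSpace ℝ (Fin n), ‖ω‖ = 1 → f₀ ≤ f ω)
    (hlip : ∀ ω₁ ω₂ : EuclideanSpace ℝ (Fin n), ‖ω₁‖ = 1 → ‖ω₂‖ = 1 →
      |f ω₁ - f ω₂| ≤ L * Real.arccos ⟪ω₁, ω₂⟫)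
    (ε : ℝ) (hε : ε = f₀ ^ 2 / (L * π + f₀)) :
    ∀ y : EuclideanSpace ℝ (Fin n), ‖y‖ < ε →
      ∀ x ∈ Omega f, ∀ t ∈ Set.Icc (0 : ℝ) 1, y + t • (x - y) ∈ Omega f := by
  have hpi := Real.pi_pos
  have hL : 0 ≤ L := by
    have h1 : ‖(EuclideanSpace.single (⟨0, by omega⟩ : Fin n) (1 : ℝ))‖ = 1 := by simp
    have h := hlip _ _ h1 ((norm_neg _).trans h1)
    rw [inner_neg_right, real_inner_self_eq_norm_sq, h1] at h
    norm_num at h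
    have h' := (abs_nonneg _).trans h
    exact nonneg_of_mul_nonneg_left h' hpi
  have hden : 0 < L * π + f₀ := by positivity
  have hεeq : ε * (L * π + f₀) = f₀ ^ 2 := by rw [hε]; field_simp
  have hε0 : 0 < ε := by rw [hε]; positivity
  have hLπ : 0 ≤ L * π := by positivity
  have hεf : ε ≤ f₀ := by
    by_contra h
    push Not at h
    nlinarith
  intro y hy x hx t ht
  obtain ⟨ht0, ht1⟩ := ht
  set z := y + t • (x - y) with hzdef
  have hz1 : z = (1 - t) • y + t • x := by rw [hzdef]; module
  by_cases hz0 : z = 0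
  · exact Or.inl hz0
  refine Or.inr ⟨hz0, ?_⟩
  have hzp : 0 < ‖z‖ := norm_pos_iff.2 hz0
  have hzu : ‖‖z‖⁻¹ • z‖ = 1 := by rw [norm_smul, norm_inv, norm_norm]; field_simp
  rcases lt_or_ge ‖z‖ f₀ with hlt | hge
  · exact hlt.trans_le (hlow _ hzu)
  have hw : ‖(1 - t) • y‖ = (1 - t) * ‖y‖ := by
    rw [norm_smul, Real.norm_of_nonneg (by linarith)]
  have hzn : ‖z‖ ≤ (1 - t) * ‖y‖ + t * ‖x‖ := by
    rw [hz1, ← hw]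
    refine (norm_add_le _ _).trans ?_
    rw [norm_smul t, Real.norm_of_nonneg ht0]
  have hxf : f₀ ≤ ‖x‖ := by
    by_contra h
    push Not at h
    rcases ht0.eq_or_lt with h0 | h0
    · rw [← h0] at hzn; linarith
    · nlinarith
  have hx0 : x ≠ 0 := norm_pos_iff.1 (hf₀.trans_le hxf)
  have hxp : 0 < ‖x‖ := norm_pos_iff.2 hx0
  have hxu : ‖‖x‖⁻¹ • x‖ = 1 := by rw [norm_smul, norm_inv, norm_norm]; field_simp
  have hxlt : ‖x‖ < f (‖x‖⁻¹ • x) := by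
    rcases hx with h | h
    · exact absurd h hx0
    · exact h.2
  have hyn := norm_nonneg y
  have hθ := arccos_aux z ((1 - t) • y) (‖x‖⁻¹ • x) (t * ‖x‖) (by positivity) hxu
    (by rw [hz1, smul_smul, mul_assoc, mul_inv_cancel₀ hxp.ne', mul_one])
    (by rw [hw]; nlinarith) hzp
  rw [hw] at hθ
  have hl := (abs_le.1 (hlip _ _ hxu hzu)).2
  have h1 : (1 - t) * ‖y‖ / ‖z‖ ≤ (1 - t) * (ε / f₀) := by
    rw [mul_div_assoc]
    have : 0 ≤ 1 - t := by linarith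
    gcongr
  have h2 : L * Real.arccos ⟪‖x‖⁻¹ • x, ‖z‖⁻¹ • z⟫ ≤ L * (π / 2 * ((1 - t) * (ε / f₀))) := by
    refine mul_le_mul_of_nonneg_left (hθ.trans ?_) hL
    gcongr
  have h3 : L * (π / 2 * (ε / f₀)) ≤ f₀ - ε := by
    have : L * (π / 2 * (ε / f₀)) = L * π * ε / 2 / f₀ := by field_simp
    rw [this, div_le_iff₀ hf₀]
    nlinarith [mul_nonneg hLπ hε0.le]
  have h4 : (1 - t) * (L * (π / 2 * (ε / f₀))) ≤ (1 - t) * (‖x‖ - ‖y‖) :=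
    mul_le_mul_of_nonneg_left (by linarith) (by linarith)
  linarith
end

section
/- Let n ≥ 2, let f : S^{n-1} → ℝ be geodesically L-Lipschitz with f(ω) ≥ f₀ > 0 for all ω, and define Φ_f : ℝⁿ → ℝⁿ by Φ_f(x) = f(x/‖x‖)·x for x ≠ 0 and Φ_f(0) = 0. Then Φ_f restricted to the open unit ball B = {x : ‖x‖ < 1} is a bijection from B onto Ω_f, and Φ_f is bi-Lipschitz on B: there exist constants 0 < c ≤ C such that c‖x − y‖ ≤ ‖Φ_f(x) − Φ_f(y)‖ ≤ C‖x − y‖ for all x, y ∈ B. -/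
open Real
open scoped RealInnerProductSpace

/-- The radial transformation `Φ_f(x) = f(x/‖x‖) • x` for `x ≠ 0`, `Φ_f(0) = 0`. -/
noncomputable def Phi {n : ℕ} (f : EuclideanSpace ℝ (Fin n) → ℝ) (x : EuclideanSpace ℝ (Fin n)) :
    EuclideanSpace ℝ (Fin n) :=
  open scoped Classical in
  if x = 0 then 0 else f (‖x‖⁻¹ • x) • x


theorem Phi_zero' {n : ℕ} (g : EuclideanSpace ℝ (Fin n) → ℝ) : Phi g 0 = 0 := by
  simp [Phi]

theorem Phi_ne {n : ℕ} (g : EuclideanSpace ℝ (Fin n) → ℝ) {x : EuclideanSpace ℝ (Fin n)}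
    (hx : x ≠ 0) : Phi g x = g (‖x‖⁻¹ • x) • x := by
  simp [Phi, hx]

theorem unit_norm {n : ℕ} {x : EuclideanSpace ℝ (Fin n)} (hx : x ≠ 0) :
    ‖‖x‖⁻¹ • x‖ = 1 := by
  have : ‖x‖ ≠ 0 := norm_ne_zero_iff.mpr hx
  rw [norm_smul, norm_inv, norm_norm, inv_mul_cancel₀ this]

theorem dir_bound {n : ℕ} {x y : EuclideanSpace ℝ (Fin n)} (hx : x ≠ 0) (hy : y ≠ 0) :
    ‖x‖ * ‖‖x‖⁻¹ • x - ‖y‖⁻¹ • y‖ ≤ 2 * ‖x - y‖ := by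
  have hx' : ‖x‖ ≠ 0 := norm_ne_zero_iff.mpr hx
  have hy' : ‖y‖ ≠ 0 := norm_ne_zero_iff.mpr hy
  have e : ‖x‖ • (‖x‖⁻¹ • x - ‖y‖⁻¹ • y) = (x - y) + (‖y‖ - ‖x‖) • (‖y‖⁻¹ • y) := by
    rw [smul_sub, sub_smul, smul_inv_smul₀ hx', smul_inv_smul₀ hy']
    abel
  calc ‖x‖ * ‖‖x‖⁻¹ • x - ‖y‖⁻¹ • y‖ = ‖‖x‖ • (‖x‖⁻¹ • x - ‖y‖⁻¹ • y)‖ := by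
        rw [norm_smul, norm_norm]
    _ ≤ ‖x - y‖ + ‖(‖y‖ - ‖x‖) • (‖y‖⁻¹ • y)‖ := by rw [e]; exact norm_add_le _ _
    _ ≤ 2 * ‖x - y‖ := by
        rw [norm_smul, unit_norm hy, Real.norm_eq_abs]
        have := abs_norm_sub_norm_le y x
        rw [norm_sub_rev] at this
        linarith

theorem Phi_lip {n : ℕ} (g : EuclideanSpace ℝ (Fin n) → ℝ) (M K : ℝ) (hM0 : 0 ≤ M) (hK0 : 0 ≤ K)
    (hM : ∀ ω : EuclideanSpace ℝ (Fin n), ‖ω‖ = 1 → |g ω| ≤ M)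
    (hK : ∀ u v : EuclideanSpace ℝ (Fin n), ‖u‖ = 1 → ‖v‖ = 1 → |g u - g v| ≤ K * ‖u - v‖)
    (x y : EuclideanSpace ℝ (Fin n)) : ‖Phi g x - Phi g y‖ ≤ (M + 2 * K) * ‖x - y‖ := by
  have h0 : ∀ z : EuclideanSpace ℝ (Fin n), ‖Phi g z‖ ≤ (M + 2 * K) * ‖z‖ := by
    intro z
    by_cases hz : z = 0
    · subst hz; simp [Phi_zero']
    · rw [Phi_ne g hz, norm_smul, Real.norm_eq_abs]
      gcongr
      linarith [hM _ (unit_norm hz)]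
  by_cases hx : x = 0
  · subst hx; simpa [Phi_zero'] using h0 y
  by_cases hy : y = 0
  · subst hy; simpa [Phi_zero'] using h0 x
  rw [Phi_ne g hx, Phi_ne g hy]
  set u := ‖x‖⁻¹ • x with hu
  set v := ‖y‖⁻¹ • y with hv
  have e : g u • x - g v • y = g v • (x - y) + (g u - g v) • x := by module
  have hu1 : ‖u‖ = 1 := unit_norm hx
  have hv1 : ‖v‖ = 1 := unit_norm hy
  have d : ‖x‖ * ‖u - v‖ ≤ 2 * ‖x - y‖ := dir_bound hx hy
  calc ‖g u • x - g v • y‖ ≤ |g v| * ‖x - y‖ + |g u - g v| * ‖x‖ := by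
        rw [e, ← Real.norm_eq_abs, ← Real.norm_eq_abs, ← norm_smul, ← norm_smul]
        exact norm_add_le _ _
    _ ≤ M * ‖x - y‖ + (K * ‖u - v‖) * ‖x‖ := by
        gcongr
        · exact hM v hv1
        · exact hK u v hu1 hv1
    _ ≤ (M + 2 * K) * ‖x - y‖ := by nlinarith [mul_le_mul_of_nonneg_left d hK0]

theorem arccos_bound {n : ℕ} (u v : EuclideanSpace ℝ (Fin n)) (hu : ‖u‖ = 1) (hv : ‖v‖ = 1) :
    Real.arccos ⟪u, v⟫ ≤ π / 2 * ‖u - v‖ := by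
  have hab : |⟪u, v⟫| ≤ 1 := by
    have := abs_real_inner_le_norm u v
    rwa [hu, hv, one_mul] at this
  obtain ⟨h1, h2⟩ := abs_le.mp hab
  have ha0 := Real.arccos_nonneg ⟪u, v⟫
  have hapi := Real.arccos_le_pi ⟪u, v⟫
  have hc := Real.cos_le_one_sub_mul_cos_sq (x := Real.arccos ⟪u, v⟫) (by rwa [abs_of_nonneg ha0])
  rw [Real.cos_arccos h1 h2] at hc
  have hn : ‖u - v‖ ^ 2 = 2 - 2 * ⟪u, v⟫ := by
    rw [norm_sub_sq_real, hu, hv]; ring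
  refine le_of_sq_le_sq ?_ (by positivity)
  rw [mul_pow, hn]
  have hp : 0 < π ^ 2 := by positivity
  have : 2 / π ^ 2 * Real.arccos ⟪u, v⟫ ^ 2 * π ^ 2 ≤ (1 - ⟪u, v⟫) * π ^ 2 := by
    gcongr; linarith
  have e : 2 / π ^ 2 * Real.arccos ⟪u, v⟫ ^ 2 * π ^ 2 = 2 * Real.arccos ⟪u, v⟫ ^ 2 := by
    field_simp
  nlinarith

theorem Phi_dir {n : ℕ} (g : EuclideanSpace ℝ (Fin n) → ℝ)
    (hg : ∀ ω : EuclideanSpace ℝ (Fin n), ‖ω‖ = 1 → 0 < g ω)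
    {x : EuclideanSpace ℝ (Fin n)} (hx : x ≠ 0) :
    Phi g x ≠ 0 ∧ ‖Phi g x‖ = g (‖x‖⁻¹ • x) * ‖x‖ ∧ ‖Phi g x‖⁻¹ • Phi g x = ‖x‖⁻¹ • x := by
  have hp := hg _ (unit_norm hx)
  have e : ‖Phi g x‖ = g (‖x‖⁻¹ • x) * ‖x‖ := by
    rw [Phi_ne g hx, norm_smul, Real.norm_eq_abs, abs_of_pos hp]
  refine ⟨?_, e, ?_⟩
  · rw [Phi_ne g hx]; exact smul_ne_zero hp.ne' hx
  · rw [e, Phi_ne g hx, smul_smul]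
    congr 1
    rw [mul_inv, mul_right_comm, inv_mul_cancel₀ hp.ne', one_mul]

theorem Phi_inv {n : ℕ} (g h : EuclideanSpace ℝ (Fin n) → ℝ)
    (hg : ∀ ω : EuclideanSpace ℝ (Fin n), ‖ω‖ = 1 → 0 < g ω)
    (hh : ∀ ω : EuclideanSpace ℝ (Fin n), ‖ω‖ = 1 → h ω * g ω = 1)
    (x : EuclideanSpace ℝ (Fin n)) : Phi h (Phi g x) = x := by
  by_cases hx : x = 0
  · subst hx; simp [Phi_zero']
  · obtain ⟨a, -, c⟩ := Phi_dir g hg hx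
    rw [Phi_ne h a, c, Phi_ne g hx, smul_smul, hh _ (unit_norm hx), one_smul]

/-- If `f` is geodesically `L`-Lipschitz on the unit sphere with `f ≥ f₀ > 0`, then
`Φ_f` maps the open unit ball `B` bijectively onto `Ω_f` and is bi-Lipschitz on `B`. -/
theorem phi_biLipschitz_bijOn
    {n : ℕ} (hn : 2 ≤ n) (f : EuclideanSpace ℝ (Fin n) → ℝ) (f₀ L : ℝ) (hf₀ : 0 < f₀)
    (hlow : ∀ ω : EuclideanSpace ℝ (Fin n), ‖ω‖ = 1 → f₀ ≤ f ω)
    (hlip : ∀ ω₁ ω₂ : EuclideanSpace ℝ (Fin n), ‖ω₁‖ = 1 → ‖ω₂‖ = 1 →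
      |f ω₁ - f ω₂| ≤ L * Real.arccos ⟪ω₁, ω₂⟫) :
    Set.BijOn (Phi f) (Metric.ball (0 : EuclideanSpace ℝ (Fin n)) 1) (Omega f) ∧
      ∃ c C : ℝ, 0 < c ∧ c ≤ C ∧
        ∀ x ∈ Metric.ball (0 : EuclideanSpace ℝ (Fin n)) 1,
          ∀ y ∈ Metric.ball (0 : EuclideanSpace ℝ (Fin n)) 1,
            c * ‖x - y‖ ≤ ‖Phi f x - Phi f y‖ ∧ ‖Phi f x - Phi f y‖ ≤ C * ‖x - y‖ := by
  have hpos : ∀ ω : EuclideanSpace ℝ (Fin n), ‖ω‖ = 1 → 0 < f ω :=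
    fun ω h => hf₀.trans_le (hlow ω h)
  have hposi : ∀ ω : EuclideanSpace ℝ (Fin n), ‖ω‖ = 1 → 0 < (fun w => (f w)⁻¹) ω :=
    fun ω h => inv_pos.mpr (hpos ω h)
  have hl : ∀ x, Phi (fun w => (f w)⁻¹) (Phi f x) = x :=
    Phi_inv _ _ hpos (fun ω h => inv_mul_cancel₀ (hpos ω h).ne')
  have hr : ∀ x, Phi f (Phi (fun w => (f w)⁻¹) x) = x :=
    Phi_inv _ _ hposi (fun ω h => mul_inv_cancel₀ (hpos ω h).ne')
  refine ⟨⟨?_, ?_, ?_⟩, ?_⟩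
  · intro x hx
    rw [mem_ball_zero_iff] at hx
    by_cases h : x = 0
    · left; subst h; exact Phi_zero' f
    · right
      obtain ⟨a, b, c⟩ := Phi_dir f hpos h
      refine ⟨a, ?_⟩
      rw [c, b]
      nlinarith [hpos _ (unit_norm h)]
  · intro x _ y _ hxy
    rw [← hl x, ← hl y, hxy]
  · intro y hy
    refine ⟨Phi (fun w => (f w)⁻¹) y, ?_, hr y⟩
    rw [mem_ball_zero_iff]
    rcases hy with h | ⟨h, hlt⟩
    · subst h; simp [Phi_zero']
    · obtain ⟨a, b, c⟩ := Phi_dir _ hposi h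
      rw [b]
      change (f (‖y‖⁻¹ • y))⁻¹ * ‖y‖ < 1
      rw [inv_mul_lt_iff₀ (hpos _ (unit_norm h))]
      linarith
  · set K := |L| * (π / 2) with hKdef
    have hK0 : 0 ≤ K := by positivity
    have hK : ∀ u v : EuclideanSpace ℝ (Fin n), ‖u‖ = 1 → ‖v‖ = 1 →
        |f u - f v| ≤ K * ‖u - v‖ := by
      intro u v hu hv
      calc |f u - f v| ≤ L * Real.arccos ⟪u, v⟫ := hlip u v hu hv
        _ ≤ |L| * Real.arccos ⟪u, v⟫ :=
          mul_le_mul_of_nonneg_right (le_abs_self L) (Real.arccos_nonneg _)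
        _ ≤ |L| * (π / 2 * ‖u - v‖) :=
          mul_le_mul_of_nonneg_left (arccos_bound u v hu hv) (abs_nonneg L)
        _ = K * ‖u - v‖ := by rw [hKdef]; ring
    obtain ⟨e, he⟩ : ∃ e : EuclideanSpace ℝ (Fin n), ‖e‖ = 1 :=
      ⟨EuclideanSpace.single ⟨0, by omega⟩ 1, by simp⟩
    have hM : ∀ ω : EuclideanSpace ℝ (Fin n), ‖ω‖ = 1 → |f ω| ≤ f e + 2 * K := by
      intro ω h
      have h1 := (abs_le.mp (hK ω e h he)).2
      have h2 : ‖ω - e‖ ≤ 2 := by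
        have := norm_sub_le ω e
        rw [h, he] at this; linarith
      rw [abs_of_pos (hpos ω h)]
      nlinarith
    have hMi : ∀ ω : EuclideanSpace ℝ (Fin n), ‖ω‖ = 1 → |(fun w => (f w)⁻¹) ω| ≤ f₀⁻¹ := by
      intro ω h
      rw [abs_of_pos (hposi ω h)]
      exact inv_anti₀ hf₀ (hlow ω h)
    have hKi : ∀ u v : EuclideanSpace ℝ (Fin n), ‖u‖ = 1 → ‖v‖ = 1 →
        |(fun w => (f w)⁻¹) u - (fun w => (f w)⁻¹) v| ≤ (K * (f₀⁻¹ * f₀⁻¹)) * ‖u - v‖ := by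
      intro u v hu hv
      have hu' := hpos u hu
      have hv' := hpos v hv
      have e1 : (f u)⁻¹ - (f v)⁻¹ = (f v - f u) * ((f u)⁻¹ * (f v)⁻¹) := by
        field_simp
      change |(f u)⁻¹ - (f v)⁻¹| ≤ _
      rw [e1, abs_mul, abs_of_pos (a := (f u)⁻¹ * (f v)⁻¹) (by positivity)]
      calc |f v - f u| * ((f u)⁻¹ * (f v)⁻¹) ≤ (K * ‖u - v‖) * (f₀⁻¹ * f₀⁻¹) := by
            gcongr
            · rw [abs_sub_comm]; exact hK u v hu hv
            · exact hlow u hu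
            · exact hlow v hv
        _ = _ := by ring
    have hup := Phi_lip f (f e + 2 * K) K (by linarith [hpos e he]) hK0 hM hK
    have hlo := Phi_lip (fun w => (f w)⁻¹) f₀⁻¹ (K * (f₀⁻¹ * f₀⁻¹)) (by positivity)
      (by positivity) hMi hKi
    set D := f₀⁻¹ + 2 * (K * (f₀⁻¹ * f₀⁻¹)) with hD
    have hD0 : 0 < D := by positivity
    refine ⟨D⁻¹, max D⁻¹ (f e + 2 * K + 2 * K), inv_pos.mpr hD0, le_max_left _ _, ?_⟩
    intro x _ y _
    constructor
    · have := hlo (Phi f x) (Phi f y)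
      rw [hl, hl] at this
      rwa [inv_mul_le_iff₀ hD0]
    · exact (hup x y).trans (mul_le_mul_of_nonneg_right (le_max_right _ _) (norm_nonneg _))
end

section
/- Let n ≥ 2 and 0 < ρ ≤ R. Let f, g : S^{n-1} → ℝ be continuous with ρ ≤ f(ω) ≤ R and ρ ≤ g(ω) ≤ R for all ω. Then for every x ∈ ℝⁿ with ‖x‖ ≤ R, |dist(x, ℝⁿ \ Ω_f) − dist(x, ℝⁿ \ Ω_g)| ≤ (R/ρ)·sup_{ω ∈ S^{n-1}} |f(ω) − g(ω)|. In particular, if f_k → f uniformly on S^{n-1} with ρ ≤ f_k ≤ R, then Ω_{f_k} → Ω_f in the Hausdorff complementary metric on the hold-all ball B_R(0). -/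
open Real Metric
open scoped RealInnerProductSpace

theorem Omega_compl_nonempty {n : ℕ} (hn : 2 ≤ n) (R : ℝ) (hR : 0 < R)
    (f : EuclideanSpace ℝ (Fin n) → ℝ)
    (hfb : ∀ ω : EuclideanSpace ℝ (Fin n), ‖ω‖ = 1 → f ω ≤ R) :
    ((Omega f)ᶜ).Nonempty := by
  let e : EuclideanSpace ℝ (Fin n) := EuclideanSpace.single ⟨0, by omega⟩ 1
  have he : ‖e‖ = 1 := by simp [e]
  have hne : ‖R • e‖ = R := by rw [norm_smul, he, mul_one, Real.norm_of_nonneg hR.le]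
  refine ⟨R • e, ?_⟩
  rintro (h | ⟨-, h⟩)
  · rw [h, norm_zero] at hne
    exact hR.ne hne
  · rw [hne, smul_smul, inv_mul_cancel₀ hR.ne', one_smul] at h
    exact absurd (hfb e he) (not_le.mpr h)

theorem infDist_Omega_le {n : ℕ} (f g : EuclideanSpace ℝ (Fin n) → ℝ) (M : ℝ) (hM : 0 ≤ M)
    (hne : ((Omega f)ᶜ).Nonempty)
    (h : ∀ ω : EuclideanSpace ℝ (Fin n), ‖ω‖ = 1 → |f ω - g ω| ≤ M)
    (x : EuclideanSpace ℝ (Fin n)) :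
    infDist x (Omega g)ᶜ ≤ infDist x (Omega f)ᶜ + M := by
  rw [← sub_le_iff_le_add]
  refine (le_infDist hne).2 fun y hy => ?_
  rw [sub_le_iff_le_add]
  have hy' : ¬ (y = 0 ∨ (y ≠ 0 ∧ ‖y‖ < f (‖y‖⁻¹ • y))) := hy
  have hy0 : y ≠ 0 := fun h0 => hy' (Or.inl h0)
  have hyf : f (‖y‖⁻¹ • y) ≤ ‖y‖ := not_lt.1 fun h1 => hy' (Or.inr ⟨hy0, h1⟩)
  have hyn : 0 < ‖y‖ := norm_pos_iff.2 hy0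
  set ω := ‖y‖⁻¹ • y with hω
  have hω1 : ‖ω‖ = 1 := by
    rw [hω, norm_smul, norm_inv, norm_norm, inv_mul_cancel₀ hyn.ne']
  have hyω : y = ‖y‖ • ω := by rw [hω, smul_smul, mul_inv_cancel₀ hyn.ne', one_smul]
  have hpos : 0 < ‖y‖ + M := by linarith
  have hzn : ‖(‖y‖ + M) • ω‖ = ‖y‖ + M := by
    rw [norm_smul, hω1, mul_one, Real.norm_of_nonneg hpos.le]
  have hz : (‖y‖ + M) • ω ∈ (Omega g)ᶜ := by
    rintro (h0 | ⟨-, h1⟩)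
    · rw [h0, norm_zero] at hzn
      exact hpos.ne hzn
    · rw [hzn, smul_smul, inv_mul_cancel₀ hpos.ne', one_smul] at h1
      have := (abs_le.1 (h ω hω1)).1
      linarith
  have hd : dist y ((‖y‖ + M) • ω) = M := by
    have : y - (‖y‖ + M) • ω = -(M • ω) := by
      rw [add_smul, ← hyω]; abel
    rw [dist_eq_norm, this, norm_neg, norm_smul, hω1, mul_one, Real.norm_of_nonneg hM]
  calc infDist x (Omega g)ᶜ ≤ dist x ((‖y‖ + M) • ω) := infDist_le_dist_of_mem hz
    _ ≤ dist x y + dist y ((‖y‖ + M) • ω) := dist_triangle _ _ _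
    _ = dist x y + M := by rw [hd]

theorem abs_infDist_Omega_le {n : ℕ} (hn : 2 ≤ n) (R : ℝ) (hR : 0 < R)
    (f g : EuclideanSpace ℝ (Fin n) → ℝ) (M : ℝ) (hM : 0 ≤ M)
    (hfb : ∀ ω : EuclideanSpace ℝ (Fin n), ‖ω‖ = 1 → f ω ≤ R)
    (hgb : ∀ ω : EuclideanSpace ℝ (Fin n), ‖ω‖ = 1 → g ω ≤ R)
    (h : ∀ ω : EuclideanSpace ℝ (Fin n), ‖ω‖ = 1 → |f ω - g ω| ≤ M)
    (x : EuclideanSpace ℝ (Fin n)) :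
    |infDist x (Omega f)ᶜ - infDist x (Omega g)ᶜ| ≤ M := by
  have h1 := infDist_Omega_le f g M hM (Omega_compl_nonempty hn R hR f hfb) h x
  have h2 := infDist_Omega_le g f M hM (Omega_compl_nonempty hn R hR g hgb)
    (fun ω hω => by rw [abs_sub_comm]; exact h ω hω) x
  rw [abs_le]
  constructor <;> linarith

/-- Stability of `Ω_f` in the Hausdorff complementary metric: for `f, g` continuous with
`ρ ≤ f, g ≤ R` on the sphere, the distance functions to the complements of `Ω_f` and
`Ω_g` differ on the hold-all ball `B_R(0)` by at most `(R/ρ) · sup_{S^{n-1}} |f − g|`.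
In particular, uniform convergence `f_k → f` on the sphere implies `Ω_{f_k} → Ω_f`
in the Hausdorff complementary metric. -/
theorem hausdorff_complementary_estimate
    {n : ℕ} (hn : 2 ≤ n) (ρ R : ℝ) (hρ : 0 < ρ) (hρR : ρ ≤ R)
    (f g : EuclideanSpace ℝ (Fin n) → ℝ)
    (hfc : ContinuousOn f (sphere (0 : EuclideanSpace ℝ (Fin n)) 1))
    (hgc : ContinuousOn g (sphere (0 : EuclideanSpace ℝ (Fin n)) 1))
    (hfb : ∀ ω : EuclideanSpace ℝ (Fin n), ‖ω‖ = 1 → ρ ≤ f ω ∧ f ω ≤ R)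
    (hgb : ∀ ω : EuclideanSpace ℝ (Fin n), ‖ω‖ = 1 → ρ ≤ g ω ∧ g ω ≤ R) :
    (∀ x : EuclideanSpace ℝ (Fin n), ‖x‖ ≤ R →
        |infDist x (Omega f)ᶜ - infDist x (Omega g)ᶜ| ≤
          (R / ρ) * ⨆ ω : sphere (0 : EuclideanSpace ℝ (Fin n)) 1, |f ω - g ω|) ∧
      ∀ fk : ℕ → EuclideanSpace ℝ (Fin n) → ℝ,
        (∀ k, ContinuousOn (fk k) (sphere (0 : EuclideanSpace ℝ (Fin n)) 1) ∧
          ∀ ω : EuclideanSpace ℝ (Fin n), ‖ω‖ = 1 → ρ ≤ fk k ω ∧ fk k ω ≤ R) →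
        (∀ ε > (0 : ℝ), ∃ K : ℕ, ∀ k ≥ K, ∀ ω : EuclideanSpace ℝ (Fin n), ‖ω‖ = 1 →
          |fk k ω - f ω| < ε) →
        ∀ ε > (0 : ℝ), ∃ K : ℕ, ∀ k ≥ K, ∀ x : EuclideanSpace ℝ (Fin n), ‖x‖ ≤ R →
          |infDist x (Omega (fk k))ᶜ - infDist x (Omega f)ᶜ| < ε := by
  have hR : 0 < R := lt_of_lt_of_le hρ hρR
  refine ⟨fun x _ => ?_, fun fk hfk hconv ε hε => ?_⟩
  · have hM : 0 ≤ ⨆ ω : sphere (0 : EuclideanSpace ℝ (Fin n)) 1, |f ω - g ω| :=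
      Real.iSup_nonneg fun _ => abs_nonneg _
    have hbdd : BddAbove (Set.range fun ω : sphere (0 : EuclideanSpace ℝ (Fin n)) 1 =>
        |f ω - g ω|) := by
      refine ⟨R, ?_⟩
      rintro _ ⟨ω, rfl⟩
      have hω : ‖(ω : EuclideanSpace ℝ (Fin n))‖ = 1 := mem_sphere_zero_iff_norm.1 ω.2
      have h1 := hfb ω hω
      have h2 := hgb ω hω
      refine abs_le.2 ⟨?_, ?_⟩ <;> linarith [h1.1, h1.2, h2.1, h2.2]
    refine (abs_infDist_Omega_le hn R hR f g _ hM (fun ω hω => (hfb ω hω).2)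
      (fun ω hω => (hgb ω hω).2) (fun ω hω => ?_) x).trans
      (le_mul_of_one_le_left hM ((one_le_div hρ).2 hρR))
    exact le_ciSup hbdd ⟨ω, mem_sphere_zero_iff_norm.2 hω⟩
  · obtain ⟨K, hK⟩ := hconv (ε / 2) (half_pos hε)
    refine ⟨K, fun k hk x _ => ?_⟩
    refine (abs_infDist_Omega_le hn R hR (fk k) f (ε / 2) (half_pos hε).le
      (fun ω hω => ((hfk k).2 ω hω).2) (fun ω hω => (hfb ω hω).2)
      (fun ω hω => (hK k hk ω hω).le) x).trans_lt (half_lt_self hε)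
end

section
/- Let n ≥ 2, let f : S^{n-1} → ℝ be continuous with f(ω) > 0 for all ω, and let q : S^{n-1} → ℝ be integrable with respect to the surface measure σ. Consider the set V of geodesically 1-Lipschitz functions v : S^{n-1} → ℝ satisfying ∫_{S^{n-1}} f^{n-1} v dσ = 0. Then there exists g ∈ V such that ∫_{S^{n-1}} q g dσ = inf_{v ∈ V} ∫_{S^{n-1}} q v dσ; that is, the linear shape-derivative functional v ↦ ∫ q v dσ attains its minimum over the admissible class V of steepest-descent directions. -/
open Real MeasureTheory
open scoped RealInnerProductSpace

lemma aux_normalize_lipschitz {E : Type*} [NormedAddCommGroup E] [NormedSpace ℝ E] :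
    LipschitzOnWith 2 (fun x : E => ‖x‖⁻¹ • x) {x : E | 1 ≤ ‖x‖} := by
  refine LipschitzOnWith.of_dist_le_mul ?_
  intro x hx y hy
  simp only [Set.mem_ofPred_eq] at hx hy
  rw [dist_eq_norm, dist_eq_norm]
  have hx0 : (0 : ℝ) < ‖x‖ := by linarith
  have hy0 : (0 : ℝ) < ‖y‖ := by linarith
  have h1 : ‖x‖⁻¹ • x - ‖y‖⁻¹ • y = ‖x‖⁻¹ • (x - y) + (‖x‖⁻¹ - ‖y‖⁻¹) • y := by
    rw [smul_sub, sub_smul]; abel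
  have h2 : ‖(‖x‖⁻¹ - ‖y‖⁻¹) • y‖ = ‖x‖⁻¹ * |‖y‖ - ‖x‖| := by
    rw [norm_smul, Real.norm_eq_abs]
    have : ‖x‖⁻¹ - ‖y‖⁻¹ = ‖x‖⁻¹ * ‖y‖⁻¹ * (‖y‖ - ‖x‖) := by field_simp
    rw [this, abs_mul, abs_of_pos (by positivity)]
    field_simp
  have h3 : ‖‖x‖⁻¹ • (x - y)‖ = ‖x‖⁻¹ * ‖x - y‖ := by
    rw [norm_smul, Real.norm_eq_abs, abs_of_pos (by positivity)]
  have h4 : ‖x‖⁻¹ ≤ 1 := inv_le_one_of_one_le₀ hx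
  have h5 : |‖y‖ - ‖x‖| ≤ ‖x - y‖ := by
    rw [norm_sub_rev]; exact abs_norm_sub_norm_le y x
  have h6 : (0 : ℝ) < ‖x‖⁻¹ := by positivity
  calc _ ≤ ‖‖x‖⁻¹ • (x - y)‖ + ‖(‖x‖⁻¹ - ‖y‖⁻¹) • y‖ := by rw [h1]; exact norm_add_le _ _
    _ ≤ 1 * ‖x - y‖ + 1 * ‖x - y‖ := by
      rw [h2, h3]
      gcongr
    _ = _ := by push_cast; ring

lemma aux_sphere_finite (m : ℕ) :
    μH[(m : ℝ)] (Metric.sphere (0 : EuclideanSpace ℝ (Fin (m + 1))) 1) < ⊤ := by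
  let φ : Fin (m + 1) × Bool → (Fin m → ℝ) → EuclideanSpace ℝ (Fin (m + 1)) :=
    fun p y => WithLp.toLp 2 (p.1.insertNth (if p.2 then (1 : ℝ) else -1) y : Fin (m + 1) → ℝ)
  let ψ : EuclideanSpace ℝ (Fin (m + 1)) → EuclideanSpace ℝ (Fin (m + 1)) := fun x => ‖x‖⁻¹ • x
  have hcover : Metric.sphere (0 : EuclideanSpace ℝ (Fin (m + 1))) 1 ⊆
      ⋃ p, ψ '' (φ p '' Set.Icc (-1) 1) := by
    intro ω hω
    have hω1 : ‖ω‖ = 1 := by simpa using hω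
    obtain ⟨i, hi⟩ := Finite.exists_max (fun i => |ω i|)
    have ha : 0 < |ω i| := by
      rcases (abs_nonneg (ω i)).lt_or_eq with h | h
      · exact h
      · exfalso
        have : ω = 0 := by
          ext j
          have := hi j
          simp only at this
          rw [← h] at this
          simpa using this
        rw [this] at hω1
        simp at hω1
    have hx : ∃ p, (|ω i|)⁻¹ • ω ∈ φ p '' Set.Icc (-1) 1 := by
      have hs : (|ω i|)⁻¹ * ω i = if decide (0 < ω i) then (1 : ℝ) else -1 := by
        by_cases h : 0 < ω i
        · simp [h, abs_of_pos h, h.ne']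
        · have h' : ω i < 0 := lt_of_le_of_ne (not_lt.1 h) (by intro h0; simp [h0] at ha)
          simp [h, abs_of_neg h', inv_neg, h'.ne]
      refine ⟨(i, decide (0 < ω i)), fun j => (|ω i|)⁻¹ * ω (i.succAbove j), ?_, ?_⟩
      · have hb : ∀ j, |(|ω i|)⁻¹ * ω (i.succAbove j)| ≤ 1 := by
          intro j
          rw [abs_mul, abs_inv, abs_abs, inv_mul_le_iff₀ ha, mul_one]
          exact hi _
        exact ⟨fun j => (abs_le.1 (hb j)).1, fun j => (abs_le.1 (hb j)).2⟩
      · ext j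
        refine Fin.succAboveCases i ?_ (fun k => ?_) j
        · simp only [φ, Fin.insertNth_apply_same, PiLp.smul_apply, smul_eq_mul]
          exact hs.symm
        · simp [φ]
    obtain ⟨p, hp⟩ := hx
    refine Set.mem_iUnion.2 ⟨p, _, hp, ?_⟩
    simp only [ψ]
    rw [norm_smul, hω1, smul_smul]
    simp [ha.ne']
  refine lt_of_le_of_lt (measure_mono hcover) ?_
  refine lt_of_le_of_lt (measure_iUnion_le _) ?_
  rw [tsum_fintype]
  refine ENNReal.sum_lt_top.2 fun p _ => ?_
  have hφ : LipschitzWith _ (φ p) :=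
    (PiLp.lipschitzWith_toLp 2 (fun _ : Fin (m + 1) => ℝ)).comp
      (g := fun y : Fin m → ℝ => (p.1.insertNth (if p.2 then (1 : ℝ) else -1) y : Fin (m + 1) → ℝ))
      (Kg := 1) (by
        refine LipschitzWith.of_dist_le_mul fun x y => ?_
        rw [NNReal.coe_one, one_mul]
        refine (dist_pi_le_iff dist_nonneg).2 fun j => ?_
        refine Fin.succAboveCases p.1 ?_ (fun k => ?_) j
        · simp
        · simpa using dist_le_pi_dist x y k)
  have hψ : LipschitzOnWith 2 ψ (φ p '' Set.Icc (-1) 1) := by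
    refine aux_normalize_lipschitz.mono ?_
    rintro _ ⟨y, -, rfl⟩
    have := PiLp.norm_apply_le (φ p y) p.1
    refine le_trans ?_ this
    by_cases h : p.2 <;> simp [φ, h]
  refine lt_of_le_of_lt (hψ.hausdorffMeasure_image_le (Nat.cast_nonneg m)) ?_
  refine ENNReal.mul_lt_top (by simp) ?_
  refine lt_of_le_of_lt (hφ.hausdorffMeasure_image_le (Nat.cast_nonneg m) _) ?_
  refine ENNReal.mul_lt_top (by exact ENNReal.rpow_lt_top_of_nonneg (Nat.cast_nonneg m) ENNReal.coe_ne_top) ?_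
  have := @hausdorffMeasure_pi_real (Fin m) _
  rw [Fintype.card_fin] at this
  rw [this]
  exact isCompact_Icc.measure_lt_top

lemma aux_min {X : Type*} [TopologicalSpace X] [CompactSpace X] [MeasurableSpace X]
    [BorelSpace X] (ν : Measure X) [IsFiniteMeasure ν] (d : X → X → ℝ)
    (hd : ∀ x, Continuous (d x)) (hd0 : ∀ x, d x x = 0) (hdn : ∀ x y, 0 ≤ d x y)
    (hdπ : ∀ x y, d x y ≤ π)
    (p q : X → ℝ) (hp : Continuous p) (hp0 : ∀ x, 0 < p x) (hq : Integrable q ν) :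
    ∃ g : X → ℝ, ((∀ x y, |g x - g y| ≤ d x y) ∧ ∫ x, p x * g x ∂ν = 0) ∧
      ∀ w : X → ℝ, (∀ x y, |w x - w y| ≤ d x y) → ∫ x, p x * w x ∂ν = 0 →
        ∫ x, q x * g x ∂ν ≤ ∫ x, q x * w x ∂ν := by
  classical
  rcases eq_or_ne ν 0 with rfl | hν
  · exact ⟨fun _ => 0, by simpa using hdn, by simp⟩
  have hcont : ∀ w : X → ℝ, (∀ x y, |w x - w y| ≤ d x y) → Continuous w := by
    intro w hw
    rw [continuous_iff_continuousAt]
    intro x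
    rw [ContinuousAt, tendsto_iff_dist_tendsto_zero]
    have h := (hd x).tendsto x
    rw [hd0] at h
    refine squeeze_zero (fun _ => dist_nonneg) (fun y => ?_) h
    rw [dist_comm]
    exact hw x y
  have hpint : Integrable p ν :=
    (BoundedContinuousFunction.mkOfCompact ⟨p, hp⟩).integrable ν
  have hint : ∀ (r : X → ℝ), Integrable r ν → ∀ w : BoundedContinuousFunction X ℝ,
      Integrable (fun x => r x * w x) ν := fun r hr w =>
    hr.mul_bdd w.continuous.aestronglyMeasurable (Filter.Eventually.of_forall w.norm_coe_le_norm)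
  have hfun : ∀ (r : X → ℝ), Integrable r ν →
      Continuous (fun w : BoundedContinuousFunction X ℝ => ∫ x, r x * w x ∂ν) := by
    intro r hr
    refine LipschitzWith.continuous (K := (∫ x, ‖r x‖ ∂ν).toNNReal) ?_
    refine LipschitzWith.of_dist_le_mul fun v w => ?_
    rw [Real.coe_toNNReal _ (integral_nonneg fun _ => norm_nonneg _), dist_eq_norm,
      ← integral_sub (hint r hr v) (hint r hr w), ← integral_mul_const]
    refine norm_integral_le_of_norm_le (hr.norm.mul_const _) (Filter.Eventually.of_forall fun x => ?_)
    rw [← mul_sub, norm_mul, ← dist_eq_norm]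
    gcongr
    exact BoundedContinuousFunction.dist_coe_le_dist x
  have hpos : ∀ w : X → ℝ, Continuous w → (∀ x, 0 < w x) → 0 < ∫ x, p x * w x ∂ν := by
    intro w hw hw0
    rw [integral_pos_iff_support_of_nonneg (fun x => (mul_pos (hp0 x) (hw0 x)).le)
      (hint p hpint (BoundedContinuousFunction.mkOfCompact ⟨w, hw⟩))]
    have : Function.support (fun x => p x * w x) = Set.univ :=
      Set.eq_univ_of_forall fun x => (mul_pos (hp0 x) (hw0 x)).ne'
    rw [this]
    exact Measure.measure_univ_pos.2 hν
  have hbdd : ∀ w : X → ℝ, (∀ x y, |w x - w y| ≤ d x y) → ∫ x, p x * w x ∂ν = 0 →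
      ∀ x, w x ∈ Set.Icc (-π) π := by
    intro w hw h0 z
    have hwc := hcont w hw
    have h1 : ∃ x, w x ≤ 0 := by
      by_contra! h
      exact (hpos w hwc h).ne' h0
    have h2 : ∃ x, 0 ≤ w x := by
      by_contra! h
      have := hpos (fun x => -w x) hwc.neg (fun x => neg_pos.2 (h x))
      simp only [mul_neg, integral_neg, h0] at this
      simp at this
    obtain ⟨x, hx⟩ := h1
    obtain ⟨y, hy⟩ := h2
    have hx' := abs_le.1 ((hw x z).trans (hdπ x z))
    have hy' := abs_le.1 ((hw y z).trans (hdπ y z))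
    constructor <;> linarith [hx'.1, hx'.2, hy'.1, hy'.2]
  let A : Set (BoundedContinuousFunction X ℝ) :=
    {w | (∀ x y, |w x - w y| ≤ d x y) ∧ ∫ x, p x * w x ∂ν = 0}
  have hAclosed : IsClosed A := by
    have h1 : IsClosed {w : BoundedContinuousFunction X ℝ | ∀ x y, |w x - w y| ≤ d x y} := by
      simp only [Set.ofPred_forall]
      refine isClosed_iInter fun x => isClosed_iInter fun y => ?_
      refine isClosed_le ?_ continuous_const
      exact ((continuous_eval_const x).sub (continuous_eval_const y)).abs
    exact h1.inter (isClosed_eq (hfun p hpint) continuous_const)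
  have hAc : IsCompact A := by
    refine BoundedContinuousFunction.arzela_ascoli₂ (Set.Icc (-π) π) isCompact_Icc A hAclosed
      (fun w x hw => hbdd w hw.1 hw.2 x) ?_
    intro x
    refine Metric.equicontinuousAt_of_continuity_modulus (d x) ?_ _
      (Filter.Eventually.of_forall fun y w => w.2.1 x y)
    have h := (hd x).tendsto x
    rwa [hd0] at h
  have hAne : A.Nonempty := ⟨0, by simpa [A] using hdn⟩
  obtain ⟨g, hgA, hg⟩ := hAc.exists_isMinOn hAne (hfun q hq).continuousOn
  refine ⟨g, hgA, fun w hw h0 => ?_⟩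
  exact hg (show BoundedContinuousFunction.mkOfCompact ⟨w, hcont w hw⟩ ∈ A from ⟨hw, h0⟩)

/-- Existence of a direction of steepest descent: for `n ≥ 2`, `f` continuous and
positive on the unit sphere and `q` integrable on the sphere with respect to the surface
(Hausdorff) measure `σ`, the linear shape-derivative functional `v ↦ ∫ q v dσ` attains
its infimum over the admissible class `V` of geodesically `1`-Lipschitz functions
satisfying the linearised volume constraint `∫ f^{n-1} v dσ = 0`. -/
theorem exists_steepest_descent_direction
    {n : ℕ} (hn : 2 ≤ n) (f q : EuclideanSpace ℝ (Fin n) → ℝ)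
    (hfpos : ∀ ω : EuclideanSpace ℝ (Fin n), ‖ω‖ = 1 → 0 < f ω)
    (hfc : ContinuousOn f (Metric.sphere (0 : EuclideanSpace ℝ (Fin n)) 1))
    (hq : IntegrableOn q (Metric.sphere (0 : EuclideanSpace ℝ (Fin n)) 1)
      (μH[(n : ℝ) - 1]))
    (V : Set (EuclideanSpace ℝ (Fin n) → ℝ))
    (hV : V = {v | (∀ ω₁ ω₂ : EuclideanSpace ℝ (Fin n), ‖ω₁‖ = 1 → ‖ω₂‖ = 1 →
        |v ω₁ - v ω₂| ≤ Real.arccos ⟪ω₁, ω₂⟫) ∧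
      (∫ ω in Metric.sphere (0 : EuclideanSpace ℝ (Fin n)) 1,
        f ω ^ (n - 1) * v ω ∂(μH[(n : ℝ) - 1])) = 0}) :
    ∃ g ∈ V,
      (∫ ω in Metric.sphere (0 : EuclideanSpace ℝ (Fin n)) 1,
          q ω * g ω ∂(μH[(n : ℝ) - 1])) =
        sInf ((fun v : EuclideanSpace ℝ (Fin n) → ℝ =>
          ∫ ω in Metric.sphere (0 : EuclideanSpace ℝ (Fin n)) 1,
            q ω * v ω ∂(μH[(n : ℝ) - 1])) '' V) := by
  classical
  obtain ⟨m, rfl⟩ : ∃ m, n = m + 1 := ⟨n - 1, by omega⟩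
  have hcast : ((m + 1 : ℕ) : ℝ) - 1 = (m : ℝ) := by push_cast; ring
  rw [hcast] at hq hV ⊢
  set S := Metric.sphere (0 : EuclideanSpace ℝ (Fin (m + 1))) 1 with hS
  have hSm : MeasurableSet S := Metric.isClosed_sphere.measurableSet
  haveI : CompactSpace S := isCompact_iff_compactSpace.1 (isCompact_sphere _ _)
  have hSn : ∀ x : S, ‖(x : EuclideanSpace ℝ (Fin (m + 1)))‖ = 1 := fun x => by
    simpa [hS] using x.2
  let ν : Measure S := Measure.comap Subtype.val μH[(m : ℝ)]
  haveI : IsFiniteMeasure ν := ⟨by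
    simp only [ν]
    rw [comap_subtype_coe_apply hSm]
    simpa using aux_sphere_finite m⟩
  have hI : ∀ r v : EuclideanSpace ℝ (Fin (m + 1)) → ℝ,
      ∫ ω in S, r ω * v ω ∂(μH[(m : ℝ)]) = ∫ x : S, r x * v x ∂ν := fun r v =>
    (integral_subtype_comap hSm (fun ω => r ω * v ω)).symm
  obtain ⟨g, ⟨hg1, hg2⟩, hg3⟩ := aux_min ν
    (fun x y : S => Real.arccos ⟪(x : EuclideanSpace ℝ (Fin (m + 1))), (y : EuclideanSpace ℝ (Fin (m + 1)))⟫)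
    (fun x => Real.continuous_arccos.comp (by fun_prop))
    (fun x => by simp [real_inner_self_eq_norm_sq, hSn x])
    (fun x y => Real.arccos_nonneg _) (fun x y => Real.arccos_le_pi _)
    (fun x : S => f x ^ (m + 1 - 1)) (fun x : S => q x)
    ((continuousOn_iff_continuous_domRestrict.1 hfc).pow _)
    (fun x => pow_pos (hfpos _ (hSn x)) _)
    ((integrableOn_iff_comap_subtypeVal hSm).1 hq)
  let G : EuclideanSpace ℝ (Fin (m + 1)) → ℝ := fun ω => if h : ω ∈ S then g ⟨ω, h⟩ else 0
  have hG : ∀ x : S, G x = g x := fun x => by simp [G]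
  have hGV : G ∈ V := by
    rw [hV]
    refine ⟨fun ω₁ ω₂ h₁ h₂ => ?_, ?_⟩
    · have := hg1 ⟨ω₁, by simpa [hS] using h₁⟩ ⟨ω₂, by simpa [hS] using h₂⟩
      rw [← hG, ← hG] at this
      exact this
    · rw [hI (fun ω => f ω ^ (m + 1 - 1))]
      simp only [hG]
      exact hg2
  refine ⟨G, hGV, Eq.symm ?_⟩
  refine IsLeast.csInf_eq ⟨⟨G, hGV, rfl⟩, ?_⟩
  rintro _ ⟨v, hv, rfl⟩
  rw [hV] at hv
  simp only [hI]
  simp only [hG]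
  refine hg3 (fun x => v x) (fun x y => hv.1 _ _ (hSn x) (hSn y)) ?_
  rw [← hI (fun ω => f ω ^ (m + 1 - 1))]
  exact hv.2
end

section
/- Let h, H : (0,2π) → ℝ be Lebesgue integrable, and let f̄ : [0,2π] → ℝ be continuous and positive with f̄(0) = f̄(2π). Consider the set V_∞ of functions v : [0,2π] → ℝ that are 1-Lipschitz, satisfy v(0) = v(2π), and satisfy ∫₀^{2π} f̄(φ) v(φ) dφ = 0; for such v the derivative v′(φ) exists for almost every φ and satisfies |v′(φ)| ≤ 1. Then there exists g ∈ V_∞ such that ∫₀^{2π} (h(φ) g(φ) + H(φ) g′(φ)) dφ = inf_{v ∈ V_∞} ∫₀^{2π} (h(φ) v(φ) + H(φ) v′(φ)) dφ. -/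
open Real MeasureTheory

namespace SteepestAux

open BoundedContinuousFunction Topology

/-- Extension of a bounded continuous function on `[0,T]` to the real line. -/
noncomputable def ext {T : ℝ} (hT : 0 ≤ T) (u : Set.Icc 0 T →ᵇ ℝ) : ℝ → ℝ :=
  Set.IccExtend hT u

lemma ext_continuous {T : ℝ} (hT : 0 ≤ T) (u : Set.Icc 0 T →ᵇ ℝ) : Continuous (ext hT u) :=
  u.continuous.Icc_extend'

lemma ext_lip {T : ℝ} (hT : 0 ≤ T) (u : Set.Icc 0 T →ᵇ ℝ) (hu : LipschitzWith 1 u) :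
    LipschitzWith 1 (ext hT u) := by
  simpa using! hu.comp (LipschitzWith.projIcc hT)

lemma ext_apply {T : ℝ} (hT : 0 ≤ T) (u : Set.Icc 0 T →ᵇ ℝ) (x : ℝ) (hx : x ∈ Set.Icc 0 T) :
    ext hT u x = u ⟨x, hx⟩ := Set.IccExtend_of_mem _ _ hx

lemma cont_int {T : ℝ} (hT : 0 ≤ T) (w : ℝ → ℝ) (hw : IntervalIntegrable w volume 0 T) :
    Continuous (fun u : Set.Icc 0 T →ᵇ ℝ => ∫ x in (0:ℝ)..T, w x * ext hT u x) := by
  rw [continuous_iff_continuousAt]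
  intro u0
  apply intervalIntegral.continuousAt_of_dominated_interval
    (bound := fun x => ‖w x‖ * (‖u0‖ + 1))
  · refine Filter.Eventually.of_forall fun u => ?_
    exact (hw.mul_continuousOn (ext_continuous hT u).continuousOn).def'.aestronglyMeasurable
  · filter_upwards [Metric.ball_mem_nhds u0 one_pos] with u hu
    refine Filter.Eventually.of_forall fun x _ => ?_
    rw [norm_mul]
    gcongr
    have h1 : ‖ext hT u x‖ ≤ ‖u‖ := u.norm_coe_le_norm _
    have h2 : ‖u - u0‖ < 1 := by simpa [dist_eq_norm] using hu
    have h3 : ‖u‖ ≤ ‖u0‖ + ‖u - u0‖ := norm_le_norm_add_norm_sub' u u0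
    linarith
  · exact hw.norm.mul_const _
  · refine Filter.Eventually.of_forall fun x _ => ?_
    have : Continuous (fun u : Set.Icc 0 T →ᵇ ℝ => ext hT u x) :=
      continuous_eval_const (Set.projIcc 0 T hT x)
    exact (continuous_const.mul this).continuousAt

lemma integrable_mul_deriv {T : ℝ} (w v : ℝ → ℝ) (hw : IntervalIntegrable w volume 0 T)
    (hv : LipschitzWith 1 v) : IntervalIntegrable (fun x => w x * deriv v x) volume 0 T := by
  refine hw.norm.mono_fun' (f := fun x => w x * deriv v x) ?_ ?_
  · exact hw.def'.aestronglyMeasurable.mul (measurable_deriv v).aestronglyMeasurable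
  · refine Filter.Eventually.of_forall fun x => ?_
    have := norm_deriv_le_of_lipschitz (x₀ := x) hv
    simp only [norm_mul]
    calc ‖w x‖ * ‖deriv v x‖ ≤ ‖w x‖ * 1 := by gcongr; simpa using this
      _ = _ := mul_one _

lemma cont_deriv {T : ℝ} (hT : 0 ≤ T) (w : ℝ → ℝ) (hw : IntervalIntegrable w volume 0 T) :
    ContinuousOn (fun u : Set.Icc 0 T →ᵇ ℝ => ∫ x in (0:ℝ)..T, w x * deriv (ext hT u) x)
      {u | LipschitzWith 1 u} := by
  apply continuousOn_of_uniform_approx_of_continuousOn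
  intro U hU
  obtain ⟨ε, hε, hεU⟩ := Metric.mem_uniformity_dist.1 hU
  have hw' : IntegrableOn w (Set.Ioc 0 T) := (intervalIntegrable_iff_integrableOn_Ioc_of_le hT).1 hw
  obtain ⟨k, hk1, hk2, hk3⟩ := (memLp_one_iff_integrable.2 hw').exist_eLpNorm_sub_le
    (by simp) le_rfl (half_pos hε)
  have hkc : Continuous k := hk2.continuous
  have hki : IntervalIntegrable k volume 0 T := hkc.intervalIntegrable _ _
  have hdk : Continuous (deriv k) := hk2.continuous_deriv (by simp)
  have hkac : AbsolutelyContinuousOnInterval k 0 T := by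
    obtain ⟨C, hC⟩ := (hk2.of_le (m := 1) (by simp)).lipschitzWith_of_hasCompactSupport hk1 (by simp)
    exact (hC.lipschitzOnWith).absolutelyContinuousOnInterval
  have hnorm : ∫ x in (0:ℝ)..T, ‖w x - k x‖ ≤ ε / 2 := by
    rw [intervalIntegral.integral_of_le hT]
    have hi : Integrable (fun x => w x - k x) (volume.restrict (Set.Ioc 0 T)) :=
      ((intervalIntegrable_iff_integrableOn_Ioc_of_le hT).1 (hw.sub hki))
    rw [integral_norm_eq_lintegral_enorm hi.aestronglyMeasurable]
    rw [eLpNorm_one_eq_lintegral_enorm] at hk3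
    exact ENNReal.toReal_le_of_le_ofReal (half_pos hε).le hk3
  refine ⟨fun u => ∫ x in (0:ℝ)..T, k x * deriv (ext hT u) x, ?_, ?_⟩
  · have : ContinuousOn (fun u : Set.Icc 0 T →ᵇ ℝ =>
        k T * ext hT u T - k 0 * ext hT u 0 - ∫ x in (0:ℝ)..T, deriv k x * ext hT u x)
        {u | LipschitzWith 1 u} := by
      have he : ∀ x, Continuous (fun u : Set.Icc 0 T →ᵇ ℝ => ext hT u x) := fun x =>
        continuous_eval_const (Set.projIcc 0 T hT x)
      exact (((continuous_const.mul (he T)).sub (continuous_const.mul (he 0))).sub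
        (cont_int hT _ (hdk.intervalIntegrable _ _))).continuousOn
    refine this.congr fun u hu => ?_
    exact hkac.integral_mul_deriv_eq_deriv_mul
      ((ext_lip hT u hu).lipschitzOnWith).absolutelyContinuousOnInterval
  · intro u hu
    apply hεU
    have hl := ext_lip hT u hu
    rw [dist_eq_norm, ← intervalIntegral.integral_sub (integrable_mul_deriv _ _ hw hl)
      (integrable_mul_deriv _ _ hki hl)]
    refine lt_of_le_of_lt (intervalIntegral.norm_integral_le_of_norm_le hT
      (g := fun x => ‖w x - k x‖) ?_ (hw.sub hki).norm) (by linarith)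
    refine Filter.Eventually.of_forall fun x _ => ?_
    rw [← sub_mul, norm_mul]
    have := norm_deriv_le_of_lipschitz (x₀ := x) hl
    calc _ ≤ ‖w x - k x‖ * 1 := by gcongr; simpa using this
      _ = _ := mul_one _

/-- A function orthogonal to a positive weight vanishes somewhere. -/
lemma exists_zero {T : ℝ} (hT : 0 < T) (f v : ℝ → ℝ) (hf : ContinuousOn f (Set.Icc 0 T))
    (hpos : ∀ x ∈ Set.Icc 0 T, 0 < f x) (hv : ContinuousOn v (Set.Icc 0 T))
    (h0 : ∫ x in (0:ℝ)..T, f x * v x = 0) : ∃ x ∈ Set.Icc 0 T, v x = 0 := by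
  by_contra! hne
  have hc : ContinuousOn (fun x => f x * v x) (Set.Icc 0 T) := hf.mul hv
  have hT0 : (0:ℝ) ∈ Set.Icc 0 T := ⟨le_rfl, hT.le⟩
  rcases lt_or_gt_of_ne (hne 0 hT0) with h | h
  · have hneg : ∀ x ∈ Set.Icc 0 T, v x < 0 := by
      intro x hx
      by_contra! hx0
      obtain ⟨y, hy, hy0⟩ := isPreconnected_Icc.intermediate_value hT0 hx hv ⟨h.le, hx0⟩
      exact hne y hy hy0
    have := intervalIntegral.integral_pos hT hc.neg
      (fun x hx => by
        have := mul_neg_of_pos_of_neg (hpos x (Set.Ioc_subset_Icc_self hx))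
          (hneg x (Set.Ioc_subset_Icc_self hx))
        simpa using this.le)
      ⟨0, hT0, by simpa using mul_neg_of_pos_of_neg (hpos 0 hT0) h⟩
    simp [h0] at this
  · have hp : ∀ x ∈ Set.Icc 0 T, 0 < v x := by
      intro x hx
      by_contra! hx0
      obtain ⟨y, hy, hy0⟩ := isPreconnected_Icc.intermediate_value hx hT0 hv ⟨hx0, h.le⟩
      exact hne y hy hy0
    have := intervalIntegral.integral_pos hT hc
      (fun x hx => (mul_pos (hpos x (Set.Ioc_subset_Icc_self hx))
          (hp x (Set.Ioc_subset_Icc_self hx))).le)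
      ⟨0, hT0, mul_pos (hpos 0 hT0) h⟩
    simp [h0] at this

lemma main {T : ℝ} (hT : 0 < T) (h H : ℝ → ℝ)
    (hh : IntegrableOn h (Set.Ioo 0 T)) (hH : IntegrableOn H (Set.Ioo 0 T))
    (f : ℝ → ℝ) (hf : ContinuousOn f (Set.Icc 0 T)) (hpos : ∀ x ∈ Set.Icc 0 T, 0 < f x)
    (V : Set (ℝ → ℝ))
    (hV : V = {v | LipschitzOnWith 1 v (Set.Icc 0 T) ∧ v 0 = v T ∧
      (∫ x in (0 : ℝ)..T, f x * v x) = 0}) :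
    ∃ g ∈ V, (∫ x in (0 : ℝ)..T, (h x * g x + H x * deriv g x)) =
        sInf ((fun v : ℝ → ℝ => ∫ x in (0 : ℝ)..T, (h x * v x + H x * deriv v x)) '' V) := by
  have hT' := hT.le
  have hhi : IntervalIntegrable h volume 0 T :=
    (intervalIntegrable_iff_integrableOn_Ioo_of_le hT').2 hh
  have hHi : IntervalIntegrable H volume 0 T :=
    (intervalIntegrable_iff_integrableOn_Ioo_of_le hT').2 hH
  have hfi : IntervalIntegrable f volume 0 T :=
    ContinuousOn.intervalIntegrable (by rwa [Set.uIcc_of_le hT'])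
  have he : ∀ x, Continuous (fun u : Set.Icc 0 T →ᵇ ℝ => ext hT' u x) := fun x =>
    continuous_eval_const (Set.projIcc 0 T hT' x)
  let K : Set (Set.Icc 0 T →ᵇ ℝ) := {u | LipschitzWith 1 u ∧ ext hT' u 0 = ext hT' u T ∧
    ∫ x in (0:ℝ)..T, f x * ext hT' u x = 0}
  have hKclosed : IsClosed K := by
    refine IsClosed.inter ?_ (IsClosed.inter (isClosed_eq (he 0) (he T))
      (isClosed_eq (cont_int hT' f hfi) continuous_const))
    have hset : {u : Set.Icc 0 T →ᵇ ℝ | LipschitzWith 1 u} =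
        ⋂ x, ⋂ y, {u | dist (u x) (u y) ≤ (1 : NNReal) * dist x y} := by
      ext u
      simp only [lipschitzWith_iff_dist_le_mul, Set.mem_iInter, Set.mem_ofPred_eq]
    change IsClosed {u : Set.Icc 0 T →ᵇ ℝ | LipschitzWith 1 u}
    rw [hset]
    refine isClosed_iInter fun x => isClosed_iInter fun y => isClosed_le ?_ continuous_const
    exact (continuous_eval_const x).dist (continuous_eval_const y)
  have hKc : IsCompact K := by
    refine arzela_ascoli₂ (Metric.closedBall (0:ℝ) T) (isCompact_closedBall _ _) K hKclosed ?_ ?_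
    · rintro u x ⟨hu1, -, hu3⟩
      obtain ⟨y, hy, hy0⟩ := exists_zero hT f _ hf hpos (ext_continuous hT' u).continuousOn hu3
      rw [ext_apply hT' u y hy] at hy0
      have := hu1.dist_le_mul x ⟨y, hy⟩
      rw [hy0] at this
      rw [Metric.mem_closedBall]
      refine this.trans ?_
      rw [Subtype.dist_eq, Real.dist_eq]
      have hx := x.2
      rw [NNReal.coe_one, one_mul, abs_le]
      constructor <;> linarith [hx.1, hx.2, hy.1, hy.2]
    · refine (LipschitzWith.uniformEquicontinuous _ 1 ?_).equicontinuous
      exact fun u => u.2.1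
  have hKne : K.Nonempty := by
    refine ⟨0, ?_, ?_, ?_⟩
    · exact LipschitzWith.const' (0:ℝ)
    · simp [ext, Set.IccExtend]
    · simp [ext, Set.IccExtend]
  let J : (ℝ → ℝ) → ℝ := fun v => ∫ x in (0 : ℝ)..T, (h x * v x + H x * deriv v x)
  have hJ : ContinuousOn (fun u => J (ext hT' u)) K := by
    have h1 : ContinuousOn (fun u : Set.Icc 0 T →ᵇ ℝ => (∫ x in (0:ℝ)..T, h x * ext hT' u x) +
        ∫ x in (0:ℝ)..T, H x * deriv (ext hT' u) x) K :=
      (cont_int hT' h hhi).continuousOn.add ((cont_deriv hT' H hHi).mono fun u hu => hu.1)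
    refine h1.congr fun u hu => ?_
    exact intervalIntegral.integral_add
      (hhi.mul_continuousOn (ext_continuous hT' u).continuousOn)
      (integrable_mul_deriv _ _ hHi (ext_lip hT' u hu.1))
  obtain ⟨u, huK, hmin⟩ := hKc.exists_isMinOn hKne hJ
  have hgV : ext hT' u ∈ V := by
    rw [hV]
    exact ⟨(ext_lip hT' u huK.1).lipschitzOnWith, huK.2.1, huK.2.2⟩
  refine ⟨ext hT' u, hgV, ?_⟩
  symm
  apply IsLeast.csInf_eq
  refine ⟨⟨_, hgV, rfl⟩, ?_⟩
  rintro _ ⟨v, hv, rfl⟩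
  rw [hV] at hv
  obtain ⟨hv1, hv2, hv3⟩ := hv
  have hlip : LipschitzWith 1 (fun x : Set.Icc 0 T => v x) := fun x y => hv1 x.2 y.2
  let u' : Set.Icc 0 T →ᵇ ℝ := BoundedContinuousFunction.mkOfCompact ⟨_, hlip.continuous⟩
  have hu' : ∀ x ∈ Set.Icc 0 T, ext hT' u' x = v x := fun x hx => ext_apply hT' u' x hx
  have hu'K : u' ∈ K := by
    refine ⟨hlip, ?_, ?_⟩
    · rw [hu' 0 ⟨le_rfl, hT'⟩, hu' T ⟨hT', le_rfl⟩, hv2]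
    · refine Eq.trans ?_ hv3
      refine intervalIntegral.integral_congr fun x hx => ?_
      rw [Set.uIcc_of_le hT'] at hx
      simp only [hu' x hx]
  have hJJ : J (ext hT' u') = J v := by
    simp only [J]
    rw [intervalIntegral.integral_of_le hT', intervalIntegral.integral_of_le hT',
      integral_Ioc_eq_integral_Ioo, integral_Ioc_eq_integral_Ioo]
    refine setIntegral_congr_fun measurableSet_Ioo fun x hx => ?_
    have hev : ext hT' u' =ᶠ[𝓝 x] v := by
      filter_upwards [Icc_mem_nhds hx.1 hx.2] with y hy using hu' y hy
    simp only [hev.deriv_eq, hu' x (Set.Ioo_subset_Icc_self hx)]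
  have := hmin hu'K
  simp only [Set.mem_ofPred_eq, hJJ] at this
  exact this

end SteepestAux


/-- Existence of a steepest descent direction for the 2-dimensional shape derivative:
for `h, H` integrable on `(0,2π)` and `f̄` continuous positive on `[0,2π]` with
`f̄(0) = f̄(2π)`, the functional `v ↦ ∫₀^{2π} (h v + H v′)` attains its infimum over the
class `V_∞` of `1`-Lipschitz functions with `v(0) = v(2π)` and `∫₀^{2π} f̄ v = 0`.
(For a Lipschitz `v`, `deriv v` agrees almost everywhere with the derivative, which
exists a.e. by Rademacher's theorem and satisfies `|v′| ≤ 1`.) -/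
theorem exists_steepest_descent_direction_dim2
    (h H : ℝ → ℝ)
    (hh : IntegrableOn h (Set.Ioo 0 (2 * π)))
    (hH : IntegrableOn H (Set.Ioo 0 (2 * π)))
    (fbar : ℝ → ℝ) (hfc : ContinuousOn fbar (Set.Icc 0 (2 * π)))
    (hfpos : ∀ φ ∈ Set.Icc (0 : ℝ) (2 * π), 0 < fbar φ)
    (hfper : fbar 0 = fbar (2 * π))
    (V : Set (ℝ → ℝ))
    (hV : V = {v | LipschitzOnWith 1 v (Set.Icc 0 (2 * π)) ∧ v 0 = v (2 * π) ∧
      (∫ φ in (0 : ℝ)..(2 * π), fbar φ * v φ) = 0}) :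
    ∃ g ∈ V,
      (∫ φ in (0 : ℝ)..(2 * π), (h φ * g φ + H φ * deriv g φ)) =
        sInf ((fun v : ℝ → ℝ =>
          ∫ φ in (0 : ℝ)..(2 * π), (h φ * v φ + H φ * deriv v φ)) '' V) := by
  exact SteepestAux.main (by positivity) h H hh hH fbar hfc hfpos V hV
end

section
/- Let q : (0,2π) → ℝ be Lebesgue integrable with ∫₀^{2π} q(t) dt = 0, and define G(φ) := −∫₀^{φ} q(t) dt for φ ∈ [0,2π], so that G(0) = G(2π) = 0. Then for every 1-Lipschitz function v : [0,2π] → ℝ with v(0) = v(2π) and every β ∈ ℝ, ∫₀^{2π} q(φ) v(φ) dφ ≥ −∫₀^{2π} |G(φ) − β| dφ. -/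
open Real MeasureTheory

/-- Key lower bound: if `q` is integrable on `(0,2π)` with `∫₀^{2π} q = 0`, and
`G(φ) = −∫₀^φ q`, then for every `1`-Lipschitz `v : [0,2π] → ℝ` with `v(0) = v(2π)`
and every `β ∈ ℝ`, one has `∫₀^{2π} q v ≥ −∫₀^{2π} |G − β|`. -/
theorem integral_q_mul_ge_neg_integral_abs
    (q : ℝ → ℝ) (hq : IntegrableOn q (Set.Ioo 0 (2 * π)))
    (hq0 : (∫ t in (0 : ℝ)..(2 * π), q t) = 0)
    (G : ℝ → ℝ) (hG : ∀ φ : ℝ, G φ = -∫ t in (0 : ℝ)..φ, q t)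
    (v : ℝ → ℝ) (hv : LipschitzOnWith 1 v (Set.Icc 0 (2 * π)))
    (hvper : v 0 = v (2 * π)) (β : ℝ) :
    (∫ φ in (0 : ℝ)..(2 * π), q φ * v φ) ≥ -∫ φ in (0 : ℝ)..(2 * π), |G φ - β| := by
  have hpi : (0 : ℝ) ≤ 2 * π := by positivity
  have hqi : IntervalIntegrable q volume 0 (2 * π) :=
    (intervalIntegrable_iff_integrableOn_Ioo_of_le hpi).2 hq
  have hvac : AbsolutelyContinuousOnInterval v 0 (2 * π) := by
    apply LipschitzOnWith.absolutelyContinuousOnInterval (K := 1)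
    rwa [Set.uIcc_of_le hpi]
  have hcac : AbsolutelyContinuousOnInterval (fun _ : ℝ => β) 0 (2 * π) :=
    ((LipschitzWith.const β).lipschitzOnWith (s := Set.uIcc 0 (2 * π))).absolutelyContinuousOnInterval
  have hFac : AbsolutelyContinuousOnInterval (fun x => (∫ t in (0 : ℝ)..x, q t) + β) 0 (2 * π) :=
    (hqi.absolutelyContinuousOnInterval_intervalIntegral Set.left_mem_uIcc).add hcac
  have hparts := hFac.integral_mul_deriv_eq_deriv_mul hvac
  have hq' : ∫ x in (0 : ℝ)..(2 * π), deriv (fun x => (∫ t in (0 : ℝ)..x, q t) + β) x * v x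
      = ∫ x in (0 : ℝ)..(2 * π), q x * v x := by
    apply intervalIntegral.integral_congr_ae
    filter_upwards [hqi.ae_hasDerivAt_integral] with x hx hxm
    have h := ((hx (Set.uIoc_subset_uIcc hxm) 0 Set.left_mem_uIcc).add_const β).deriv
    rw [h]
  rw [hq'] at hparts
  simp only [hq0, intervalIntegral.integral_same, hvper, sub_self, zero_sub] at hparts
  have hle : ∫ x in (0 : ℝ)..(2 * π), ((∫ t in (0 : ℝ)..x, q t) + β) * deriv v x
      ≤ ∫ φ in (0 : ℝ)..(2 * π), |G φ - β| := by
    apply intervalIntegral.integral_mono_on_of_le_Ioo hpi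
    · exact hvac.intervalIntegrable_deriv.continuousOn_mul hFac.continuousOn
    · apply ContinuousOn.intervalIntegrable
      refine (hFac.continuousOn.abs).congr fun x _ => ?_
      simp only [hG]
      rw [← abs_neg]
      congr 1
      ring
    · intro x hx
      have hd : |deriv v x| ≤ 1 := by
        have := norm_deriv_le_of_lipschitzOn (Icc_mem_nhds hx.1 hx.2) hv
        simpa using this
      have hGx : |G x - β| = |(∫ t in (0 : ℝ)..x, q t) + β| := by
        rw [hG, ← abs_neg]
        congr 1
        ring
      rw [hGx]
      refine (le_abs_self _).trans ?_
      rw [abs_mul]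
      exact mul_le_of_le_one_right (abs_nonneg _) hd
  linarith
end

section
/- Let q : (0,2π) → ℝ be Lebesgue integrable with ∫₀^{2π} q(t) dt = 0, set G(φ) := −∫₀^{φ} q(t) dt, let β* := sup{r ∈ ℝ : |{φ ∈ (0,2π) : G(φ) < r}| ≤ π}, set O₊ := {φ : G(φ) > β*}, O₋ := {φ : G(φ) < β*}, O₀ := {φ : G(φ) = β*}, and let k := 0 if |O₀| = 0 and k := (|O₊| − |O₋|)/|O₀| otherwise. Define ḡ(φ) := ∫₀^{φ} (1_{O₋}(t) − 1_{O₊}(t) + k·1_{O₀}(t)) dt. Then ∫₀^{2π} q(φ) ḡ(φ) dφ = −∫₀^{2π} |G(φ) − β*| dφ, and ḡ(2π) = ḡ(0) = 0. -/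
open Real MeasureTheory

/-- Both median inequalities for the level `β`. -/
theorem median_aux (G : ℝ → ℝ) (hc : ContinuousOn G (Set.Icc 0 (2 * π))) (β : ℝ)
    (hβ : β = sSup {r : ℝ |
      volume {φ ∈ Set.Ioo (0 : ℝ) (2 * π) | G φ < r} ≤ ENNReal.ofReal π}) :
    volume {φ ∈ Set.Ioo (0 : ℝ) (2 * π) | G φ < β} ≤ ENNReal.ofReal π ∧
    ENNReal.ofReal π ≤ volume {φ ∈ Set.Ioo (0 : ℝ) (2 * π) | G φ ≤ β} := by
  have hpi := Real.pi_pos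
  obtain ⟨C, hC⟩ := isCompact_Icc.exists_bound_of_continuousOn hc
  have hC' : ∀ x ∈ Set.Ioo (0 : ℝ) (2 * π), -C ≤ G x ∧ G x ≤ C := fun x hx =>
    abs_le.1 (hC x ⟨hx.1.le, hx.2.le⟩)
  set S := {r : ℝ | volume {φ ∈ Set.Ioo (0 : ℝ) (2 * π) | G φ < r} ≤ ENNReal.ofReal π} with hS
  have hne : S.Nonempty := by
    refine ⟨-C, ?_⟩
    have : {φ ∈ Set.Ioo (0 : ℝ) (2 * π) | G φ < -C} = ∅ := by
      ext x
      simp only [Set.mem_ofPred_eq, Set.mem_empty_iff_false, iff_false, not_and, not_lt]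
      exact fun hx => (hC' x hx).1
    rw [hS, Set.mem_ofPred_eq, this, measure_empty]
    exact zero_le
  have hbdd : BddAbove S := by
    refine ⟨C, fun r hr => ?_⟩
    by_contra! h
    have : {φ ∈ Set.Ioo (0 : ℝ) (2 * π) | G φ < r} = Set.Ioo 0 (2 * π) := by
      ext x
      simp only [Set.mem_ofPred_eq, and_iff_left_iff_imp]
      exact fun hx => (hC' x hx).2.trans_lt h
    rw [hS, Set.mem_ofPred_eq, this, Real.volume_Ioo,
      ENNReal.ofReal_le_ofReal_iff hpi.le] at hr
    linarith
  have hlim : Filter.Tendsto (fun n : ℕ => (1 : ℝ) / (n + 1)) Filter.atTop (nhds 0) :=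
    tendsto_one_div_add_atTop_nhds_zero_nat
  have hanti : ∀ {m n : ℕ}, m ≤ n → (1 : ℝ) / (n + 1) ≤ 1 / (m + 1) := fun h =>
    Nat.one_div_le_one_div h
  constructor
  · have hU : {φ ∈ Set.Ioo (0 : ℝ) (2 * π) | G φ < β} =
        ⋃ n : ℕ, {φ ∈ Set.Ioo (0 : ℝ) (2 * π) | G φ < β - 1 / (n + 1)} := by
      ext x
      simp only [Set.mem_ofPred_eq, Set.mem_iUnion]
      constructor
      · rintro ⟨hx, h⟩
        obtain ⟨n, hn⟩ := exists_nat_one_div_lt (sub_pos.2 h)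
        exact ⟨n, hx, by linarith⟩
      · rintro ⟨n, hx, h⟩
        have : (0 : ℝ) < 1 / (n + 1) := Nat.one_div_pos_of_nat
        exact ⟨hx, by linarith⟩
    rw [hU]
    refine le_of_tendsto (tendsto_measure_iUnion_atTop ?_) (Filter.Eventually.of_forall ?_)
    · rintro m n h x ⟨hx, h'⟩
      have := hanti h
      exact ⟨hx, by linarith⟩
    · intro n
      have : (0 : ℝ) < 1 / (n + 1) := Nat.one_div_pos_of_nat
      obtain ⟨r, hr, hlt⟩ := exists_lt_of_lt_csSup hne
        (show β - 1 / (n + 1) < sSup S by rw [← hβ]; linarith)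
      refine le_trans (measure_mono ?_) hr
      rintro x ⟨hx, h'⟩
      exact ⟨hx, h'.trans hlt⟩
  · have hU : {φ ∈ Set.Ioo (0 : ℝ) (2 * π) | G φ ≤ β} =
        ⋂ n : ℕ, {φ ∈ Set.Ioo (0 : ℝ) (2 * π) | G φ < β + 1 / (n + 1)} := by
      ext x
      simp only [Set.mem_ofPred_eq, Set.mem_iInter]
      constructor
      · rintro ⟨hx, h⟩ n
        have : (0 : ℝ) < 1 / (n + 1) := Nat.one_div_pos_of_nat
        exact ⟨hx, by linarith⟩
      · intro h
        refine ⟨(h 0).1, ?_⟩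
        by_contra! hlt
        obtain ⟨n, hn⟩ := exists_nat_one_div_lt (sub_pos.2 hlt)
        have := (h n).2
        linarith
    rw [hU]
    refine ge_of_tendsto (tendsto_measure_iInter_atTop ?_ ?_ ?_) (Filter.Eventually.of_forall ?_)
    · intro n
      exact ((hc.mono Set.Ioo_subset_Icc_self).isOpen_inter_preimage isOpen_Ioo
        (isOpen_Iio (a := β + 1 / ((n : ℝ) + 1)))).measurableSet.nullMeasurableSet
    · rintro m n h x ⟨hx, h'⟩
      have := hanti h
      exact ⟨hx, by linarith⟩
    · refine ⟨0, ne_top_of_le_ne_top (b := volume (Set.Ioo (0 : ℝ) (2 * π))) measure_Ioo_lt_top.ne ?_⟩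
      exact measure_mono fun x hx => hx.1
    · intro n
      have : (0 : ℝ) < 1 / (n + 1) := Nat.one_div_pos_of_nat
      by_contra! h
      have h2 : β + 1 / ((n : ℝ) + 1) ∈ S := le_of_lt h
      have := le_csSup hbdd h2
      rw [← hβ] at this
      linarith

/-- The optimal descent direction `ḡ` built from the median level `β*` of
`G(φ) = −∫₀^φ q` saturates the lower bound: `∫₀^{2π} q ḡ = −∫₀^{2π} |G − β*|`,
and `ḡ(2π) = ḡ(0) = 0`. -/
theorem optimal_direction_saturates
    (q : ℝ → ℝ) (hq : IntegrableOn q (Set.Ioo 0 (2 * π)))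
    (hq0 : (∫ t in (0 : ℝ)..(2 * π), q t) = 0)
    (G : ℝ → ℝ) (hG : ∀ φ : ℝ, G φ = -∫ t in (0 : ℝ)..φ, q t)
    (β : ℝ)
    (hβ : β = sSup {r : ℝ |
      volume {φ ∈ Set.Ioo (0 : ℝ) (2 * π) | G φ < r} ≤ ENNReal.ofReal π})
    (Op Om Oz : Set ℝ)
    (hOp : Op = {φ ∈ Set.Ioo (0 : ℝ) (2 * π) | G φ > β})
    (hOm : Om = {φ ∈ Set.Ioo (0 : ℝ) (2 * π) | G φ < β})
    (hOz : Oz = {φ ∈ Set.Ioo (0 : ℝ) (2 * π) | G φ = β})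
    (k : ℝ)
    (hk0 : volume Oz = 0 → k = 0)
    (hk1 : volume Oz ≠ 0 → k = ((volume Op).toReal - (volume Om).toReal) / (volume Oz).toReal)
    (g : ℝ → ℝ)
    (hg : ∀ φ : ℝ, g φ = ∫ t in (0 : ℝ)..φ,
      (Om.indicator (fun _ => (1 : ℝ)) t - Op.indicator (fun _ => (1 : ℝ)) t +
        k * Oz.indicator (fun _ => (1 : ℝ)) t)) :
    (∫ φ in (0 : ℝ)..(2 * π), q φ * g φ) = -(∫ φ in (0 : ℝ)..(2 * π), |G φ - β|) ∧
      g (2 * π) = 0 ∧ g 0 = 0 := by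
  have hpi := Real.pi_pos
  have h2pi : (0 : ℝ) ≤ 2 * π := by positivity
  have hqi : IntervalIntegrable q volume 0 (2 * π) :=
    (intervalIntegrable_iff_integrableOn_Ioo_of_le h2pi).2 hq
  have hGfun : G = fun φ => -∫ t in (0 : ℝ)..φ, q t := funext hG
  have hGac : AbsolutelyContinuousOnInterval G 0 (2 * π) := by
    rw [hGfun]
    exact (hqi.absolutelyContinuousOnInterval_intervalIntegral (c := 0) (by simp)).neg
  have hc : ContinuousOn G (Set.Icc 0 (2 * π)) := by
    have := hGac.continuousOn
    rwa [Set.uIcc_of_le h2pi] at this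
  have hcI := hc.mono Set.Ioo_subset_Icc_self
  obtain ⟨hm1, hm2⟩ := median_aux G hc β hβ
  have mOm : MeasurableSet Om := by
    rw [hOm]; exact (hcI.isOpen_inter_preimage isOpen_Ioo (isOpen_Iio (a := β))).measurableSet
  have mOp : MeasurableSet Op := by
    rw [hOp]; exact (hcI.isOpen_inter_preimage isOpen_Ioo (isOpen_Ioi (a := β))).measurableSet
  have hOz' : Oz = Set.Ioo 0 (2 * π) \ (Om ∪ Op) := by
    subst hOz hOm hOp
    ext x
    simp only [Set.mem_ofPred_eq, Set.mem_sdiff, Set.mem_union]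
    grind
  have mOz : MeasurableSet Oz := by
    rw [hOz']; exact measurableSet_Ioo.diff (mOm.union mOp)
  have sOm : Om ⊆ Set.Ioo 0 (2 * π) := by rw [hOm]; exact fun x hx => hx.1
  have sOp : Op ⊆ Set.Ioo 0 (2 * π) := by rw [hOp]; exact fun x hx => hx.1
  have sOz : Oz ⊆ Set.Ioo 0 (2 * π) := by rw [hOz]; exact fun x hx => hx.1
  have fin : ∀ A ⊆ Set.Ioo 0 (2 * π), volume A ≠ ⊤ := fun A hA =>
    ne_top_of_le_ne_top (b := volume (Set.Ioo (0 : ℝ) (2 * π))) measure_Ioo_lt_top.ne (measure_mono hA)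
  have ind_int : ∀ A, MeasurableSet A → A ⊆ Set.Ioo 0 (2 * π) →
      Integrable (A.indicator (fun _ => (1 : ℝ))) := fun A mA hA =>
    (integrable_indicator_iff mA).2 (integrableOn_const (fin A hA))
  have ind_val : ∀ A, MeasurableSet A → A ⊆ Set.Ioo 0 (2 * π) →
      (∫ t in (0 : ℝ)..(2 * π), A.indicator (fun _ => (1 : ℝ)) t) = (volume A).toReal := by
    intro A mA hA
    rw [intervalIntegral.integral_of_le h2pi, setIntegral_indicator mA,
      Set.inter_eq_right.2 (hA.trans Set.Ioo_subset_Ioc_self)]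
    simp [Measure.real]
  set h : ℝ → ℝ := fun t => (Om.indicator (fun _ => (1 : ℝ)) t - Op.indicator (fun _ => (1 : ℝ)) t +
        k * Oz.indicator (fun _ => (1 : ℝ)) t) with hh
  have hhi : IntervalIntegrable h volume 0 (2 * π) :=
    (((ind_int Om mOm sOm).sub (ind_int Op mOp sOp)).add
      ((ind_int Oz mOz sOz).const_mul k)).intervalIntegrable
  have hgfun : g = fun φ => ∫ t in (0 : ℝ)..φ, h t := funext hg
  have hsum : (volume Om).toReal + (volume Op).toReal + (volume Oz).toReal = 2 * π := by
    have e1 : volume.real Oz = volume.real (Set.Ioo 0 (2 * π)) - volume.real (Om ∪ Op) := by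
      rw [hOz']
      exact measureReal_sdiff (Set.union_subset sOm sOp) (mOm.union mOp)
        (fin _ subset_rfl)
    have hdisj : Disjoint Om Op := by
      rw [Set.disjoint_left, hOm, hOp]
      rintro x ⟨_, h1⟩ ⟨_, h2⟩
      exact lt_asymm h1 h2
    have e2 : volume.real (Om ∪ Op) = volume.real Om + volume.real Op :=
      measureReal_union hdisj mOp (fin _ sOm) (fin _ sOp)
    have e3 : volume.real (Set.Ioo 0 (2 * π)) = 2 * π := by
      simp [Measure.real, hpi.le]
    simp only [Measure.real] at e1 e2 e3
    linarith
  have hhint : (∫ t in (0 : ℝ)..(2 * π), h t) = 0 := by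
    have : (∫ t in (0 : ℝ)..(2 * π), h t) =
        (volume Om).toReal - (volume Op).toReal + k * (volume Oz).toReal := by
      rw [hh, intervalIntegral.integral_add, intervalIntegral.integral_sub,
        intervalIntegral.integral_const_mul, ind_val _ mOm sOm, ind_val _ mOp sOp,
        ind_val _ mOz sOz]
      · exact (ind_int Om mOm sOm).intervalIntegrable
      · exact (ind_int Op mOp sOp).intervalIntegrable
      · exact ((ind_int Om mOm sOm).sub (ind_int Op mOp sOp)).intervalIntegrable
      · exact ((ind_int Oz mOz sOz).const_mul k).intervalIntegrable
    rw [this]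
    by_cases hz : volume Oz = 0
    · have hle : volume {φ ∈ Set.Ioo (0 : ℝ) (2 * π) | G φ ≤ β} ≤ volume Om := by
        calc _ ≤ volume (Om ∪ Oz) := by
              apply measure_mono
              rintro x ⟨hx, hxb⟩
              rw [hOm, hOz]
              rcases lt_or_eq_of_le hxb with h1 | h1
              · exact Or.inl ⟨hx, h1⟩
              · exact Or.inr ⟨hx, h1⟩
          _ ≤ volume Om + volume Oz := measure_union_le _ _
          _ = volume Om := by rw [hz, add_zero]
      have hOmv : volume Om = ENNReal.ofReal π := by
        refine le_antisymm ?_ (hm2.trans hle)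
        rw [hOm]; exact hm1
      have e : (volume Om).toReal = π := by rw [hOmv, ENNReal.toReal_ofReal hpi.le]
      rw [hz, ENNReal.toReal_zero] at hsum ⊢
      linarith
    · rw [hk1 hz, div_mul_cancel₀]
      · ring
      · exact ENNReal.toReal_ne_zero.2 ⟨hz, fin _ sOz⟩
  have hg0 : g 0 = 0 := by rw [hg]; simp
  have hg2 : g (2 * π) = 0 := by rw [hgfun]; exact hhint
  have hG0 : G 0 = 0 := by rw [hG]; simp
  have hG2 : G (2 * π) = 0 := by rw [hG, hq0, neg_zero]
  refine ⟨?_, hg2, hg0⟩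
  have hgac : AbsolutelyContinuousOnInterval g 0 (2 * π) := by
    rw [hgfun]
    exact hhi.absolutelyContinuousOnInterval_intervalIntegral (c := 0) (by simp)
  have parts := hGac.integral_mul_deriv_eq_deriv_mul hgac
  rw [hG0, hG2] at parts
  have p1 : (∫ x in (0 : ℝ)..(2 * π), G x * deriv g x) =
      ∫ x in (0 : ℝ)..(2 * π), G x * h x := by
    apply intervalIntegral.integral_congr_ae
    filter_upwards [hhi.ae_hasDerivAt_integral] with x hx hx'
    have := hx (Set.uIoc_subset_uIcc hx') 0 (by simp)
    rw [← hgfun] at this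
    rw [this.deriv]
  have p2 : (∫ x in (0 : ℝ)..(2 * π), deriv G x * g x) =
      ∫ x in (0 : ℝ)..(2 * π), -(q x * g x) := by
    apply intervalIntegral.integral_congr_ae
    filter_upwards [hqi.ae_hasDerivAt_integral] with x hx hx'
    have := (hx (Set.uIoc_subset_uIcc hx') 0 (by simp)).fun_neg
    rw [← hGfun] at this
    rw [this.deriv]
    ring
  rw [p1, p2, intervalIntegral.integral_neg] at parts
  have hGh : IntervalIntegrable (fun x => G x * h x) volume 0 (2 * π) :=
    hhi.continuousOn_mul hGac.continuousOn
  have p3 : (∫ x in (0 : ℝ)..(2 * π), G x * h x) =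
      ∫ x in (0 : ℝ)..(2 * π), (G x * h x - β * h x) := by
    rw [intervalIntegral.integral_sub hGh (hhi.const_mul β),
      intervalIntegral.integral_const_mul, hhint]
    ring
  have p4 : (∫ x in (0 : ℝ)..(2 * π), (G x * h x - β * h x)) =
      ∫ x in (0 : ℝ)..(2 * π), -|G x - β| := by
    rw [intervalIntegral.integral_of_le h2pi, intervalIntegral.integral_of_le h2pi,
      integral_Ioc_eq_integral_Ioo, integral_Ioc_eq_integral_Ioo]
    apply setIntegral_congr_fun measurableSet_Ioo
    intro x hx
    have i1 : x ∈ Om ↔ G x < β := by rw [hOm]; exact ⟨fun h => h.2, fun h => ⟨hx, h⟩⟩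
    have i2 : x ∈ Op ↔ G x > β := by rw [hOp]; exact ⟨fun h => h.2, fun h => ⟨hx, h⟩⟩
    have i3 : x ∈ Oz ↔ G x = β := by rw [hOz]; exact ⟨fun h => h.2, fun h => ⟨hx, h⟩⟩
    simp only [hh]
    rcases lt_trichotomy (G x) β with h1 | h1 | h1
    · rw [abs_of_neg (sub_neg.2 h1), Set.indicator_of_mem (i1.2 h1),
        Set.indicator_of_notMem (fun h2 => lt_asymm h1 (i2.1 h2)),
        Set.indicator_of_notMem (fun h2 => h1.ne (i3.1 h2))]
      ring
    · simp [h1]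
    · rw [abs_of_pos (sub_pos.2 h1), Set.indicator_of_notMem (fun h2 => lt_asymm h1 (i1.1 h2)),
        Set.indicator_of_mem (i2.2 h1), Set.indicator_of_notMem (fun h2 => h1.ne' (i3.1 h2))]
      ring
  rw [← intervalIntegral.integral_neg, ← p4, ← p3, parts]
  ring
end

section
/- Let q : (0,2π) → ℝ be Lebesgue integrable with ∫₀^{2π} q(t) dt = 0, and let f̄ : [0,2π] → ℝ be continuous and positive. Set G(φ) := −∫₀^{φ} q(t) dt, β* := sup{r ∈ ℝ : |{φ ∈ (0,2π) : G(φ) < r}| ≤ π}, O₊ := {φ : G(φ) > β*}, O₋ := {φ : G(φ) < β*}, O₀ := {φ : G(φ) = β*}, and k := 0 if |O₀| = 0, k := (|O₊| − |O₋|)/|O₀| otherwise. Define ḡ(φ) := α + ∫₀^{φ} (1_{O₋}(t) − 1_{O₊}(t) + k·1_{O₀}(t)) dt, where the constant α ∈ ℝ is chosen so that ∫₀^{2π} f̄(φ) ḡ(φ) dφ = 0. Then ḡ is 1-Lipschitz on [0,2π] with ḡ(0) = ḡ(2π), and ∫₀^{2π} q(φ) ḡ(φ) dφ ≤ ∫₀^{2π}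 q(φ) v(φ) dφ for every 1-Lipschitz function v : [0,2π] → ℝ with v(0) = v(2π) and ∫₀^{2π} f̄(φ) v(φ) dφ = 0; that is, ḡ is a direction of steepest descent for the functional v ↦ ∫₀^{2π} q v dφ in this admissible class. -/
open Real MeasureTheory

lemma aux_open (G : ℝ → ℝ) (hG : ContinuousOn G (Set.Icc 0 (2 * π))) (U : Set ℝ) (hU : IsOpen U) :
    IsOpen {φ ∈ Set.Ioo (0 : ℝ) (2 * π) | G φ ∈ U} :=
  (hG.mono Set.Ioo_subset_Icc_self).isOpen_inter_preimage isOpen_Ioo hU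

lemma aux_median (G : ℝ → ℝ) (hG : ContinuousOn G (Set.Icc 0 (2 * π))) (β : ℝ)
    (hβ : β = sSup {r : ℝ |
      volume {φ ∈ Set.Ioo (0 : ℝ) (2 * π) | G φ < r} ≤ ENNReal.ofReal π}) :
    volume {φ ∈ Set.Ioo (0 : ℝ) (2 * π) | G φ < β} ≤ ENNReal.ofReal π ∧
    volume {φ ∈ Set.Ioo (0 : ℝ) (2 * π) | G φ > β} ≤ ENNReal.ofReal π := by
  have hpi := Real.pi_pos
  set A : ℝ → Set ℝ := fun r => {φ ∈ Set.Ioo (0 : ℝ) (2 * π) | G φ < r} with hA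
  have hmono : ∀ r s, r ≤ s → A r ⊆ A s := fun r s h φ hφ => ⟨hφ.1, lt_of_lt_of_le hφ.2 h⟩
  obtain ⟨M, hM⟩ := isCompact_Icc.exists_bound_of_continuousOn hG
  have hmeas : ∀ r, MeasurableSet (A r) := fun r =>
    (aux_open G hG (Set.Iio r) isOpen_Iio).measurableSet
  set S : Set ℝ := {r : ℝ | volume (A r) ≤ ENNReal.ofReal π} with hS
  have hβ' : β = sSup S := hβ
  have hbd : ∀ φ ∈ Set.Ioo (0 : ℝ) (2 * π), |G φ| ≤ M := fun φ hφ =>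
    hM φ (Set.Ioo_subset_Icc_self hφ)
  have hne : S.Nonempty := by
    refine ⟨-M, ?_⟩
    have : A (-M) = ∅ := by
      ext φ
      simp only [hA, Set.mem_ofPred_eq, Set.mem_empty_iff_false, iff_false, not_and, not_lt]
      intro h
      exact (abs_le.1 (hbd φ h)).1
    change volume (A (-M)) ≤ _
    simp [this]
  have hba : BddAbove S := by
    refine ⟨M, fun r hr => ?_⟩
    by_contra hlt
    push Not at hlt
    have : A r = Set.Ioo (0 : ℝ) (2 * π) := by
      ext φ
      simp only [hA, Set.mem_ofPred_eq, and_iff_left_iff_imp]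
      intro h
      exact lt_of_le_of_lt (abs_le.1 (hbd φ h)).2 hlt
    have hr' : volume (A r) ≤ ENNReal.ofReal π := hr
    rw [this, Real.volume_Ioo, ENNReal.ofReal_le_ofReal_iff hpi.le] at hr'
    linarith
  constructor
  · have hU : A β = ⋃ n : ℕ, A (β - 1 / ((n : ℝ) + 1)) := by
      ext φ
      simp only [Set.mem_iUnion]
      constructor
      · rintro ⟨h1, h2⟩
        obtain ⟨n, hn⟩ := exists_nat_one_div_lt (sub_pos.2 h2)
        exact ⟨n, h1, by linarith⟩
      · rintro ⟨n, hn⟩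
        exact hmono _ _ (by have : 0 < 1 / ((n : ℝ) + 1) := by positivity
                            linarith) hn
    change volume (A β) ≤ _
    rw [hU, Monotone.measure_iUnion]
    · refine iSup_le fun n => ?_
      have hlt : β - 1 / ((n : ℝ) + 1) < sSup S := by
        have : 0 < 1 / ((n : ℝ) + 1) := by positivity
        linarith
      obtain ⟨r, hr, hr2⟩ := exists_lt_of_lt_csSup hne hlt
      exact (measure_mono (hmono _ _ hr2.le)).trans hr
    · intro m n hmn
      apply hmono
      have : 1 / ((n : ℝ) + 1) ≤ 1 / ((m : ℝ) + 1) := Nat.one_div_le_one_div hmn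
      linarith
  · have hU : {φ ∈ Set.Ioo (0 : ℝ) (2 * π) | G φ > β} =
        ⋃ n : ℕ, (Set.Ioo (0 : ℝ) (2 * π) \ A (β + 1 / ((n : ℝ) + 1))) := by
      ext φ
      simp only [Set.mem_iUnion, Set.mem_sdiff, hA, Set.mem_ofPred_eq, not_and, not_lt]
      constructor
      · rintro ⟨h1, h2⟩
        obtain ⟨n, hn⟩ := exists_nat_one_div_lt (sub_pos.2 h2)
        exact ⟨n, h1, fun _ => by linarith⟩
      · rintro ⟨n, h1, h2⟩
        refine ⟨h1, ?_⟩
        have : 0 < 1 / ((n : ℝ) + 1) := by positivity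
        have := h2 h1
        change β < G φ
        linarith
    rw [hU, Monotone.measure_iUnion]
    · refine iSup_le fun n => ?_
      have hn : ¬ volume (A (β + 1 / ((n : ℝ) + 1))) ≤ ENNReal.ofReal π := by
        intro h
        have h2 : β + 1 / ((n : ℝ) + 1) ≤ sSup S := le_csSup hba h
        have : 0 < 1 / ((n : ℝ) + 1) := by positivity
        linarith
      push Not at hn
      have hsub : A (β + 1 / ((n : ℝ) + 1)) ⊆ Set.Ioo (0 : ℝ) (2 * π) := fun x hx => hx.1
      rw [measure_sdiff hsub (hmeas _).nullMeasurableSet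
        (measure_ne_top_of_subset hsub measure_Ioo_lt_top.ne), Real.volume_Ioo, tsub_le_iff_right]
      calc ENNReal.ofReal (2 * π - 0) = ENNReal.ofReal π + ENNReal.ofReal π := by
            rw [← ENNReal.ofReal_add hpi.le hpi.le]; congr 1; ring
        _ ≤ _ := by gcongr
    · intro m n hmn
      apply Set.sdiff_subset_sdiff_right
      apply hmono
      have : 1 / ((n : ℝ) + 1) ≤ 1 / ((m : ℝ) + 1) := Nat.one_div_le_one_div hmn
      linarith

lemma aux_int (S : Set ℝ) (hS : MeasurableSet S) (h : S ⊆ Set.Ioo (0 : ℝ) (2 * π)) :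
    (∫ t in (0 : ℝ)..(2 * π), S.indicator (fun _ => (1 : ℝ)) t) = (volume S).toReal := by
  have hpi := Real.pi_pos
  rw [intervalIntegral.integral_of_le (by linarith), setIntegral_indicator hS,
    Set.inter_eq_self_of_subset_right (h.trans Set.Ioo_subset_Ioc_self)]
  simp [Measure.real]

lemma aux_ii (S : Set ℝ) (hS : MeasurableSet S) (a b : ℝ) :
    IntervalIntegrable (S.indicator (fun _ => (1 : ℝ))) volume a b := by
  rw [intervalIntegrable_iff]
  exact (integrableOn_const (by simp)).indicator hS

/-- Integration by parts against the primitive `G`. -/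
lemma aux_ibp (q : ℝ → ℝ) (hq : IntervalIntegrable q volume 0 (2 * π))
    (hq0 : (∫ t in (0 : ℝ)..(2 * π), q t) = 0)
    (G : ℝ → ℝ) (hG : ∀ φ : ℝ, G φ = -∫ t in (0 : ℝ)..φ, q t)
    (hGac : AbsolutelyContinuousOnInterval G 0 (2 * π)) (β : ℝ)
    (v : ℝ → ℝ) (hv : AbsolutelyContinuousOnInterval v 0 (2 * π)) (hv0 : v 0 = v (2 * π)) :
    (∫ φ in (0 : ℝ)..(2 * π), q φ * v φ) =
      ∫ φ in (0 : ℝ)..(2 * π), (G φ - β) * deriv v φ := by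
  have h1 := hGac.integral_mul_deriv_eq_deriv_mul hv
  have h2 := hv.integral_deriv_eq_sub
  have hG0 : G 0 = 0 := by simp [hG]
  have hG1 : G (2 * π) = 0 := by simp [hG, hq0]
  have h3 : (∫ x in (0 : ℝ)..(2 * π), deriv G x * v x) =
      ∫ x in (0 : ℝ)..(2 * π), -(q x * v x) := by
    apply intervalIntegral.integral_congr_ae
    filter_upwards [hq.ae_hasDerivAt_integral] with x hx hxm
    have := (hx (Set.uIoc_subset_uIcc hxm) 0 (by simp)).neg
    have h4 : HasDerivAt G (-q x) x := by
      have e : G = -fun x => ∫ t in (0 : ℝ)..x, q t := by ext y; simp [hG]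
      rw [e]; exact this
    rw [h4.deriv]; ring
  rw [h3, intervalIntegral.integral_neg, hG0, hG1] at h1
  simp_rw [sub_mul]
  rw [intervalIntegral.integral_sub, intervalIntegral.integral_const_mul, h1, h2, hv0]
  · ring
  · exact hv.intervalIntegrable_deriv.continuousOn_mul hGac.continuousOn
  · exact hv.intervalIntegrable_deriv.const_mul β

/-- The function `ḡ(φ) = α + ∫₀^φ (1_{O₋} − 1_{O₊} + k·1_{O₀})`, with `α` chosen so that
`∫₀^{2π} f̄ ḡ = 0`, is `1`-Lipschitz on `[0,2π]`, satisfies `ḡ(0) = ḡ(2π)`, and is a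
direction of steepest descent: `∫₀^{2π} q ḡ ≤ ∫₀^{2π} q v` for every `1`-Lipschitz `v`
with `v(0) = v(2π)` and `∫₀^{2π} f̄ v = 0`. -/
theorem optimal_direction_is_minimiser
    (q : ℝ → ℝ) (hq : IntegrableOn q (Set.Ioo 0 (2 * π)))
    (hq0 : (∫ t in (0 : ℝ)..(2 * π), q t) = 0)
    (fbar : ℝ → ℝ) (hfc : ContinuousOn fbar (Set.Icc 0 (2 * π)))
    (hfpos : ∀ φ ∈ Set.Icc (0 : ℝ) (2 * π), 0 < fbar φ)
    (G : ℝ → ℝ) (hG : ∀ φ : ℝ, G φ = -∫ t in (0 : ℝ)..φ, q t)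
    (β : ℝ)
    (hβ : β = sSup {r : ℝ |
      volume {φ ∈ Set.Ioo (0 : ℝ) (2 * π) | G φ < r} ≤ ENNReal.ofReal π})
    (Op Om Oz : Set ℝ)
    (hOp : Op = {φ ∈ Set.Ioo (0 : ℝ) (2 * π) | G φ > β})
    (hOm : Om = {φ ∈ Set.Ioo (0 : ℝ) (2 * π) | G φ < β})
    (hOz : Oz = {φ ∈ Set.Ioo (0 : ℝ) (2 * π) | G φ = β})
    (k : ℝ)
    (hk0 : volume Oz = 0 → k = 0)
    (hk1 : volume Oz ≠ 0 → k = ((volume Op).toReal - (volume Om).toReal) / (volume Oz).toReal)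
    (α : ℝ) (g : ℝ → ℝ)
    (hg : ∀ φ : ℝ, g φ = α + ∫ t in (0 : ℝ)..φ,
      (Om.indicator (fun _ => (1 : ℝ)) t - Op.indicator (fun _ => (1 : ℝ)) t +
        k * Oz.indicator (fun _ => (1 : ℝ)) t))
    (hα : (∫ φ in (0 : ℝ)..(2 * π), fbar φ * g φ) = 0) :
    LipschitzOnWith 1 g (Set.Icc 0 (2 * π)) ∧ g 0 = g (2 * π) ∧
      ∀ v : ℝ → ℝ, LipschitzOnWith 1 v (Set.Icc 0 (2 * π)) → v 0 = v (2 * π) →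
        (∫ φ in (0 : ℝ)..(2 * π), fbar φ * v φ) = 0 →
        (∫ φ in (0 : ℝ)..(2 * π), q φ * g φ) ≤ ∫ φ in (0 : ℝ)..(2 * π), q φ * v φ := by
  have hpi := Real.pi_pos
  have h2pi : (0 : ℝ) ≤ 2 * π := by linarith
  have hq' : IntervalIntegrable q volume 0 (2 * π) := by
    rw [intervalIntegrable_iff_integrableOn_Ioo_of_le h2pi]; exact hq
  have hGac : AbsolutelyContinuousOnInterval G 0 (2 * π) := by
    have e : G = -fun x => ∫ t in (0 : ℝ)..x, q t := by ext y; simp [hG]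
    rw [e]
    exact (hq'.absolutelyContinuousOnInterval_intervalIntegral (by simp)).neg
  have hGc : ContinuousOn G (Set.Icc 0 (2 * π)) := by
    have := hGac.continuousOn
    rwa [Set.uIcc_of_le h2pi] at this
  obtain ⟨hm1, hm2⟩ := aux_median G hGc β hβ
  rw [← hOm] at hm1
  rw [← hOp] at hm2
  have mOm : MeasurableSet Om := by
    rw [hOm]; exact (aux_open G hGc (Set.Iio β) isOpen_Iio).measurableSet
  have mOp : MeasurableSet Op := by
    rw [hOp]; exact (aux_open G hGc (Set.Ioi β) isOpen_Ioi).measurableSet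
  have hOz' : Oz = Set.Ioo (0 : ℝ) (2 * π) \ (Om ∪ Op) := by
    rw [hOz, hOm, hOp]; ext φ
    simp only [Set.mem_ofPred_eq, Set.mem_sdiff, Set.mem_union]
    constructor
    · rintro ⟨h1, h2⟩
      refine ⟨h1, ?_⟩
      rintro (h | h)
      · exact h.2.ne h2
      · exact (ne_of_gt h.2) h2
    · rintro ⟨h1, h2⟩
      refine ⟨h1, ?_⟩
      rcases lt_trichotomy (G φ) β with h | h | h
      · exact absurd (Or.inl ⟨h1, h⟩) h2
      · exact h
      · exact absurd (Or.inr ⟨h1, h⟩) h2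
  have mOz : MeasurableSet Oz := by
    rw [hOz']; exact measurableSet_Ioo.diff (mOm.union mOp)
  have sOm : Om ⊆ Set.Ioo (0 : ℝ) (2 * π) := by rw [hOm]; exact fun x hx => hx.1
  have sOp : Op ⊆ Set.Ioo (0 : ℝ) (2 * π) := by rw [hOp]; exact fun x hx => hx.1
  have sOz : Oz ⊆ Set.Ioo (0 : ℝ) (2 * π) := by rw [hOz]; exact fun x hx => hx.1
  have fOz : volume Oz ≠ ⊤ := measure_ne_top_of_subset sOz measure_Ioo_lt_top.ne
  have rm1 : (volume Om).toReal ≤ π := ENNReal.toReal_le_of_le_ofReal hpi.le hm1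
  have rm2 : (volume Op).toReal ≤ π := ENNReal.toReal_le_of_le_ofReal hpi.le hm2
  set h : ℝ → ℝ := fun t => Om.indicator (fun _ => (1 : ℝ)) t - Op.indicator (fun _ => (1 : ℝ)) t +
        k * Oz.indicator (fun _ => (1 : ℝ)) t with hh
  have val_m : ∀ t ∈ Om, h t = 1 := by
    intro t ht
    have h1 : t ∉ Op := by
      intro h'; rw [hOm] at ht; rw [hOp] at h'; exact lt_asymm ht.2 h'.2
    have h2 : t ∉ Oz := by
      intro h'; rw [hOm] at ht; rw [hOz] at h'; exact ht.2.ne h'.2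
    simp [hh, ht, h1, h2]
  have val_p : ∀ t ∈ Op, h t = -1 := by
    intro t ht
    have h1 : t ∉ Om := by
      intro h'; rw [hOp] at ht; rw [hOm] at h'; exact lt_asymm ht.2 h'.2
    have h2 : t ∉ Oz := by
      intro h'; rw [hOp] at ht; rw [hOz] at h'; exact (ne_of_gt ht.2) h'.2
    simp [hh, ht, h1, h2]
  have val_z : ∀ t ∈ Oz, h t = k := by
    intro t ht
    have h1 : t ∉ Om := by
      intro h'; rw [hOz] at ht; rw [hOm] at h'; exact h'.2.ne ht.2
    have h2 : t ∉ Op := by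
      intro h'; rw [hOz] at ht; rw [hOp] at h'; exact (ne_of_gt h'.2) ht.2
    simp [hh, ht, h1, h2]
  have hsum : (volume Om).toReal + (volume Op).toReal + (volume Oz).toReal = 2 * π := by
    rw [← aux_int Om mOm sOm, ← aux_int Op mOp sOp, ← aux_int Oz mOz sOz,
      ← intervalIntegral.integral_add (aux_ii _ mOm _ _) (aux_ii _ mOp _ _),
      ← intervalIntegral.integral_add ((aux_ii _ mOm _ _).add (aux_ii _ mOp _ _))
        (aux_ii _ mOz _ _)]
    have e : (∫ t in (0 : ℝ)..(2 * π), (Set.Ioo (0 : ℝ) (2 * π)).indicator (fun _ => (1 : ℝ)) t)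
        = 2 * π := by
      rw [aux_int _ measurableSet_Ioo subset_rfl]; simp [hpi.le]
    refine Eq.trans ?_ e
    apply intervalIntegral.integral_congr
    intro t _
    by_cases ht : t ∈ Set.Ioo (0 : ℝ) (2 * π)
    · have iff_m : t ∈ Om ↔ G t < β := by rw [hOm]; exact ⟨fun h => h.2, fun h => ⟨ht, h⟩⟩
      have iff_p : t ∈ Op ↔ β < G t := by rw [hOp]; exact ⟨fun h => h.2, fun h => ⟨ht, h⟩⟩
      have iff_z : t ∈ Oz ↔ G t = β := by rw [hOz]; exact ⟨fun h => h.2, fun h => ⟨ht, h⟩⟩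
      rcases lt_trichotomy (G t) β with h | h | h
      · have h1 : t ∈ Om := iff_m.2 h
        have h2 : t ∉ Op := fun h' => lt_asymm h (iff_p.1 h')
        have h3 : t ∉ Oz := fun h' => h.ne (iff_z.1 h')
        simp [h1, h2, h3, Set.indicator_of_mem ht]
      · have h1 : t ∉ Om := fun h' => (iff_m.1 h').ne h
        have h2 : t ∉ Op := fun h' => (iff_p.1 h').ne' h
        have h3 : t ∈ Oz := iff_z.2 h
        simp [h1, h2, h3, Set.indicator_of_mem ht]
      · have h1 : t ∉ Om := fun h' => lt_asymm h (iff_m.1 h')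
        have h2 : t ∈ Op := iff_p.2 h
        have h3 : t ∉ Oz := fun h' => h.ne' (iff_z.1 h')
        simp [h1, h2, h3, Set.indicator_of_mem ht]
    · simp [ht, show t ∉ Om from fun h' => ht (sOm h'), show t ∉ Op from fun h' => ht (sOp h'),
        show t ∉ Oz from fun h' => ht (sOz h')]
  have hk_le : |k| ≤ 1 := by
    by_cases hz : volume Oz = 0
    · simp [hk0 hz]
    · rw [hk1 hz]
      have hpos : 0 < (volume Oz).toReal := ENNReal.toReal_pos hz fOz
      rw [abs_div, abs_of_pos hpos, div_le_one hpos, abs_le]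
      constructor <;> linarith
  have hk_eq : (volume Om).toReal - (volume Op).toReal + k * (volume Oz).toReal = 0 := by
    by_cases hz : volume Oz = 0
    · rw [hz] at hsum ⊢
      simp only [ENNReal.toReal_zero] at hsum ⊢
      linarith
    · rw [hk1 hz]
      have hpos : 0 < (volume Oz).toReal := ENNReal.toReal_pos hz fOz
      field_simp
      ring
  have hcover : ∀ t ∈ Set.Ioo (0 : ℝ) (2 * π), t ∈ Om ∨ t ∈ Op ∨ t ∈ Oz := by
    intro t ht
    by_cases h1 : t ∈ Om
    · exact Or.inl h1
    by_cases h2 : t ∈ Op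
    · exact Or.inr (Or.inl h2)
    refine Or.inr (Or.inr ?_)
    rw [hOz']; exact ⟨ht, by rintro (h | h) <;> contradiction⟩
  have habs : ∀ t, |h t| ≤ 1 := by
    intro t
    by_cases ht : t ∈ Set.Ioo (0 : ℝ) (2 * π)
    · rcases hcover t ht with h1 | h1 | h1
      · rw [val_m t h1]; simp
      · rw [val_p t h1]; simp
      · rw [val_z t h1]; exact hk_le
    · simp [hh, show t ∉ Om from fun h' => ht (sOm h'), show t ∉ Op from fun h' => ht (sOp h'),
        show t ∉ Oz from fun h' => ht (sOz h')]
  have hint : ∀ a b, IntervalIntegrable h volume a b := fun a b =>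
    ((aux_ii _ mOm _ _).sub (aux_ii _ mOp _ _)).add ((aux_ii _ mOz _ _).const_mul k)
  have hgLip : LipschitzOnWith 1 g (Set.Icc 0 (2 * π)) := by
    apply LipschitzOnWith.of_dist_le_mul
    intro x _ y _
    rw [hg x, hg y, dist_add_left, dist_comm, Real.dist_eq,
      intervalIntegral.integral_interval_sub_left (hint _ _) (hint _ _), dist_comm, Real.dist_eq]
    have := intervalIntegral.norm_integral_le_of_norm_le_const (f := h) (a := x) (b := y) (C := 1)
      (fun t _ => habs t)
    simpa using this
  have hg0 : g 0 = g (2 * π) := by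
    rw [hg 0, hg (2 * π), intervalIntegral.integral_same, intervalIntegral.integral_add
      ((aux_ii _ mOm _ _).sub (aux_ii _ mOp _ _)) ((aux_ii _ mOz _ _).const_mul k),
      intervalIntegral.integral_sub (aux_ii _ mOm _ _) (aux_ii _ mOp _ _),
      intervalIntegral.integral_const_mul, aux_int Om mOm sOm, aux_int Op mOp sOp,
      aux_int Oz mOz sOz, hk_eq]
  refine ⟨hgLip, hg0, fun v hv hv0 _ => ?_⟩
  have hgac : AbsolutelyContinuousOnInterval g 0 (2 * π) := by
    apply LipschitzOnWith.absolutelyContinuousOnInterval (K := 1)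
    rwa [Set.uIcc_of_le h2pi]
  have hvac : AbsolutelyContinuousOnInterval v 0 (2 * π) := by
    apply LipschitzOnWith.absolutelyContinuousOnInterval (K := 1)
    rwa [Set.uIcc_of_le h2pi]
  rw [aux_ibp q hq' hq0 G hG hGac β g hgac hg0, aux_ibp q hq' hq0 G hG hGac β v hvac hv0]
  have hGβ : ContinuousOn (fun x => G x - β) (Set.uIcc 0 (2 * π)) :=
    hGac.continuousOn.sub continuousOn_const
  rw [intervalIntegral.integral_of_le h2pi, intervalIntegral.integral_of_le h2pi,
    integral_Ioc_eq_integral_Ioo, integral_Ioc_eq_integral_Ioo]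
  have i1 := hgac.intervalIntegrable_deriv.continuousOn_mul hGβ
  have i2 := hvac.intervalIntegrable_deriv.continuousOn_mul hGβ
  rw [intervalIntegrable_iff_integrableOn_Ioo_of_le h2pi] at i1 i2
  apply integral_mono_ae i1 i2
  rw [Filter.EventuallyLE, ae_restrict_iff' measurableSet_Ioo]
  filter_upwards [(hint 0 (2 * π)).ae_hasDerivAt_integral] with x hx hxm
  have hxI : x ∈ Set.Icc (0 : ℝ) (2 * π) := Set.Ioo_subset_Icc_self hxm
  have hd : HasDerivAt g (h x) x := by
    have e : g = fun x => α + ∫ t in (0 : ℝ)..x, h t := funext hg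
    rw [e]
    exact (hx (by rwa [Set.uIcc_of_le h2pi]) 0 (by simp)).const_add α
  have hdv : |deriv v x| ≤ 1 := by
    have := norm_deriv_le_of_lipschitzOn (Icc_mem_nhds hxm.1 hxm.2) hv
    simpa using this
  rw [hd.deriv]
  obtain ⟨hd1, hd2⟩ := abs_le.1 hdv
  rcases hcover x hxm with h1 | h1 | h1
  · rw [val_m x h1]
    rw [hOm] at h1
    have := h1.2
    nlinarith
  · rw [val_p x h1]
    rw [hOp] at h1
    have : β < G x := h1.2
    nlinarith
  · rw [hOz] at h1
    have : G x = β := h1.2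
    simp [this]
end

section
/- Let N ∈ ℕ, let C : Fin N × Fin N → ℝ be nonnegative, and let a : Fin N → ℝ satisfy Σᵢ aᵢ = 0. Set N⁺ := {i : aᵢ > 0} and N⁻ := {j : aⱼ < 0}. Then the maximum of Σ_{i ∈ N⁺} aᵢ ξᵢ + Σ_{j ∈ N⁻} aⱼ ξⱼ over all ξ : Fin N → ℝ satisfying ξᵢ − ξⱼ ≤ C_{ij} for all (i,j) ∈ N⁺ × N⁻ equals the minimum of Σ_{i ∈ N⁺} Σ_{j ∈ N⁻} C_{ij} P_{ij} over all matrices P with P_{ij} ≥ 0, Σ_{j ∈ N⁻} P_{ij} = aᵢ for every i ∈ N⁺, and Σ_{i ∈ N⁺} P_{ij} = −aⱼ for every j ∈ N⁻; moreover both the maximum and the minimum are attained. -/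
open Finset

/-- Farkas lemma for the bipartite incidence cone. -/
theorem ot_farkas {N : ℕ} (Np Nm : Finset (Fin N)) (hd : Disjoint Np Nm)
    (T : Fin N → Fin N → Prop) (hT : ∀ i j, T i j → i ∈ Np ∧ j ∈ Nm) (a : Fin N → ℝ)
    (hη : ∀ η : Fin N → ℝ, (∀ i j, T i j → η i - η j ≤ 0) → ∑ k, a k * η k ≤ 0) :
    ∃ P : Fin N → Fin N → ℝ, (∀ i j, 0 ≤ P i j) ∧ (∀ i j, ¬ T i j → P i j = 0) ∧
      ∀ k, ∑ j, P k j - ∑ i, P i k = a k := by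
  classical
  let L : (Fin N → Fin N → ℝ) →ₗ[ℝ] (Fin N → ℝ) :=
    { toFun := fun P k => ∑ j, P k j - ∑ i, P i k
      map_add' := by
        intro P Q; ext k; simp [Finset.sum_add_distrib]; ring
      map_smul' := by
        intro c P; ext k; simp [Finset.mul_sum, mul_sub] }
  have hLapp : ∀ P k, L P k = ∑ j, P k j - ∑ i, P i k := fun _ _ => rfl
  have hLc : Continuous L := L.continuous_of_finiteDimensional
  let S : Set (Fin N → Fin N → ℝ) := {P | (∀ i j, 0 ≤ P i j) ∧ (∀ i j, ¬ T i j → P i j = 0)}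
  have hSconv : Convex ℝ S := by
    rintro P ⟨hP1, hP2⟩ Q ⟨hQ1, hQ2⟩ s t hs ht _
    refine ⟨fun i j => ?_, fun i j hij => ?_⟩
    · have := mul_nonneg hs (hP1 i j)
      have := mul_nonneg ht (hQ1 i j)
      simp only [Pi.add_apply, Pi.smul_apply, smul_eq_mul]
      linarith
    · simp [hP2 i j hij, hQ2 i j hij]
  have hSclosed : IsClosed S := by
    have : S = ⋂ i, ⋂ j, ({P : Fin N → Fin N → ℝ | 0 ≤ P i j} ∩
        {P : Fin N → Fin N → ℝ | ¬ T i j → P i j = 0}) := by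
      ext P
      simp only [S, Set.mem_ofPred_eq, Set.mem_iInter, Set.mem_inter_iff]
      exact ⟨fun h i j => ⟨h.1 i j, h.2 i j⟩, fun h => ⟨fun i j => (h i j).1, fun i j => (h i j).2⟩⟩
    rw [this]
    refine isClosed_iInter fun i => isClosed_iInter fun j => IsClosed.inter ?_ ?_
    · exact isClosed_le continuous_const (by fun_prop)
    · by_cases h : T i j
      · simp [h]
      · simp only [h, not_false_eq_true, forall_const]
        exact isClosed_eq (by fun_prop) continuous_const
  have hle : ∀ P ∈ S, ∀ i j, P i j ≤ |L P i| := by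
    rintro P ⟨h1, h2⟩ i j
    by_cases h : T i j
    · have hi := (hT i j h).1
      have h0 : ∑ i', P i' i = 0 := by
        refine Finset.sum_eq_zero fun i' _ => h2 i' i fun h' => ?_
        exact (Finset.disjoint_left.mp hd hi) (hT i' i h').2
      refine le_trans ?_ (le_abs_self _)
      rw [hLapp, h0, sub_zero]
      exact Finset.single_le_sum (f := fun j => P i j) (fun j _ => h1 i j) (Finset.mem_univ j)
    · rw [h2 i j h]; exact abs_nonneg _
  have hKclosed : IsClosed (L '' S) := by
    refine IsSeqClosed.isClosed ?_
    intro x y hx hy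
    obtain ⟨R, hR⟩ := (Metric.isBounded_range_of_tendsto x hy).exists_norm_le
    have hcomp : IsCompact (L '' (S ∩ Set.Icc (fun _ _ => 0) (fun _ _ => R))) :=
      (isCompact_Icc.inter_left hSclosed).image hLc
    have hmem : ∀ n, x n ∈ L '' (S ∩ Set.Icc (fun _ _ => 0) (fun _ _ => R)) := by
      intro n
      obtain ⟨P, hP, hPx⟩ := hx n
      refine ⟨P, ⟨hP, fun i j => hP.1 i j, fun i j => ?_⟩, hPx⟩
      refine (hle P hP i j).trans ?_
      rw [hPx]
      exact (norm_le_pi_norm (x n) i).trans (hR _ ⟨n, rfl⟩)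
    have := hcomp.isClosed.mem_of_tendsto hy (Filter.Eventually.of_forall hmem)
    exact Set.image_mono Set.inter_subset_left this
  by_cases hmem : a ∈ L '' S
  · obtain ⟨P, hP, h⟩ := hmem
    exact ⟨P, hP.1, hP.2, fun k => by rw [← hLapp, h]⟩
  · exfalso
    obtain ⟨f, u, hf, hu⟩ :=
      geometric_hahn_banach_closed_point (hSconv.linear_image L) hKclosed hmem
    have hfs : ∀ x, f x = ∑ k, x k * f (Pi.single k 1) := by
      intro x
      conv_lhs => rw [pi_eq_sum_univ' x]
      simp [map_sum]
    have hu0 : 0 < u := by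
      have := hf 0 ⟨0, ⟨by simp, by simp⟩, by simp⟩
      simpa using this
    have := hη (fun k => f (Pi.single k 1)) (by
      intro i j hij
      by_contra hpos
      push Not at hpos
      set d := f (Pi.single i 1) - f (Pi.single j 1) with hdd
      let Q : Fin N → Fin N → ℝ := fun i' j' => if i' = i ∧ j' = j then u / d else 0
      have hQ : Q ∈ S := by
        refine ⟨fun i' j' => ?_, fun i' j' h => ?_⟩
        · simp only [Q]; split_ifs
          · positivity
          · exact le_rfl
        · simp only [Q]; rw [if_neg]; rintro ⟨rfl, rfl⟩; exact h hij
      have h1 := hf _ ⟨Q, hQ, rfl⟩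
      have h2 : L Q = (u / d) • (Pi.single i 1 - Pi.single j 1 : Fin N → ℝ) := by
        ext k
        rw [hLapp]
        simp only [Q, Pi.smul_apply, Pi.sub_apply, smul_eq_mul, Pi.single_apply, ite_and]
        have hne : i ≠ j := fun h => Finset.disjoint_left.mp hd (hT i j hij).1
          (h ▸ (hT i j hij).2)
        by_cases hki : k = i <;> by_cases hkj : k = j <;> simp [hki, hkj, hne, hne.symm]
      rw [h2, map_smul, map_sub, ← hdd, smul_eq_mul, div_mul_cancel₀ _ hpos.ne'] at h1
      exact lt_irrefl _ h1)
    rw [← hfs] at this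
    linarith

/-- Pairing a plan with a potential. -/
theorem ot_pair {N : ℕ} (Np Nm : Finset (Fin N)) (a : Fin N → ℝ) (P : Fin N → Fin N → ℝ)
    (h1 : ∀ i ∈ Np, ∑ j ∈ Nm, P i j = a i) (h2 : ∀ j ∈ Nm, ∑ i ∈ Np, P i j = -a j)
    (ξ : Fin N → ℝ) :
    ∑ i ∈ Np, a i * ξ i + ∑ j ∈ Nm, a j * ξ j =
      ∑ i ∈ Np, ∑ j ∈ Nm, (ξ i - ξ j) * P i j := by
  simp only [sub_mul, Finset.sum_sub_distrib]
  rw [Finset.sum_comm (f := fun i j => ξ j * P i j)]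
  simp only [← Finset.mul_sum]
  have e1 : ∑ i ∈ Np, ξ i * ∑ j ∈ Nm, P i j = ∑ i ∈ Np, a i * ξ i :=
    Finset.sum_congr rfl fun i hi => by rw [h1 i hi, mul_comm]
  have e2 : ∑ j ∈ Nm, ξ j * ∑ i ∈ Np, P i j = ∑ j ∈ Nm, -(a j * ξ j) :=
    Finset.sum_congr rfl fun j hj => by rw [h2 j hj]; ring
  rw [e1, e2, Finset.sum_neg_distrib, sub_neg_eq_add]

/-- Existence of a dual maximiser. -/
theorem ot_dual_max {N : ℕ} (C : Fin N → Fin N → ℝ) (hC : ∀ i j, 0 ≤ C i j)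
    (a : Fin N → ℝ) (ha : ∑ i, a i = 0)
    (Np Nm : Finset (Fin N))
    (hp : ∀ i, i ∈ Np ↔ 0 < a i) (hm : ∀ i, i ∈ Nm ↔ a i < 0)
    (hobj : ∀ ξ : Fin N → ℝ, ∑ i ∈ Np, a i * ξ i + ∑ j ∈ Nm, a j * ξ j = ∑ k, a k * ξ k) :
    ∃ ξ : Fin N → ℝ, (∀ i ∈ Np, ∀ j ∈ Nm, ξ i - ξ j ≤ C i j) ∧
      ∀ ξ' : Fin N → ℝ, (∀ i ∈ Np, ∀ j ∈ Nm, ξ' i - ξ' j ≤ C i j) →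
        ∑ k, a k * ξ' k ≤ ∑ k, a k * ξ k := by
  classical
  have hmass : ∑ i ∈ Np, a i + ∑ j ∈ Nm, a j = 0 := by
    have := hobj (fun _ => 1)
    simpa [ha] using this
  rcases Np.eq_empty_or_nonempty with hE | ⟨i0, hi0⟩
  · have hall : ∀ k ∈ Finset.univ, a k = 0 := by
      refine (Finset.sum_eq_zero_iff_of_nonpos fun k _ => ?_).mp ha
      by_contra h
      push Not at h
      have := (hp k).2 h
      simp [hE] at this
    refine ⟨0, fun i _ j _ => by simpa using hC i j, fun ξ' _ => ?_⟩
    refine le_of_eq (Finset.sum_congr rfl fun k hk => ?_)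
    rw [hall k hk]; simp
  have hM : 0 < ∑ i ∈ Np, a i := Finset.sum_pos (fun i hi => (hp i).1 hi) ⟨i0, hi0⟩
  have hNm : Nm.Nonempty := by
    by_contra h
    rw [Finset.not_nonempty_iff_eq_empty] at h
    simp [h] at hmass
    linarith
  obtain ⟨j0, hj0⟩ := hNm
  set M := ∑ i ∈ Np, a i with hMdef
  let P0 : Fin N → Fin N → ℝ := fun i j => a i * (-a j) / M
  have hP0 : ∀ i ∈ Np, ∀ j ∈ Nm, 0 < P0 i j := fun i hi j hj =>
    div_pos (mul_pos ((hp i).1 hi) (neg_pos.2 ((hm j).1 hj))) hM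
  have hr : ∀ i ∈ Np, ∑ j ∈ Nm, P0 i j = a i := by
    intro i _
    simp only [P0]
    rw [← Finset.sum_div, ← Finset.mul_sum, Finset.sum_neg_distrib]
    have : -∑ j ∈ Nm, a j = M := by linarith
    rw [this, mul_div_cancel_right₀ _ hM.ne']
  have hc : ∀ j ∈ Nm, ∑ i ∈ Np, P0 i j = -a j := by
    intro j _
    simp only [P0]
    rw [← Finset.sum_div, ← Finset.sum_mul, ← hMdef, mul_div_cancel_left₀ _ hM.ne']
  set V := ∑ i ∈ Np, ∑ j ∈ Nm, C i j * P0 i j with hV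
  have hV0 : 0 ≤ V := Finset.sum_nonneg fun i hi => Finset.sum_nonneg fun j hj =>
    mul_nonneg (hC i j) (hP0 i hi j hj).le
  set B := ∑ i ∈ Np, ∑ j ∈ Nm, (C i j + V / P0 i j) with hB
  have hBt : ∀ i ∈ Np, ∀ j ∈ Nm, 0 ≤ C i j + V / P0 i j := fun i hi j hj =>
    add_nonneg (hC i j) (div_nonneg hV0 (hP0 i hi j hj).le)
  have hBle : ∀ i ∈ Np, ∀ j ∈ Nm, C i j + V / P0 i j ≤ B := fun i hi j hj =>
    (Finset.single_le_sum (f := fun j => C i j + V / P0 i j) (fun j hj => hBt i hi j hj) hj).trans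
      (Finset.single_le_sum (f := fun i => ∑ j ∈ Nm, (C i j + V / P0 i j))
        (fun i hi => Finset.sum_nonneg fun j hj => hBt i hi j hj) hi)
  have hB0 : 0 ≤ B := (hBt i0 hi0 j0 hj0).trans (hBle i0 hi0 j0 hj0)
  let F : Set (Fin N → ℝ) := {ξ | ∀ i ∈ Np, ∀ j ∈ Nm, ξ i - ξ j ≤ C i j}
  have hFc : IsClosed F := by
    have : F = ⋂ i ∈ Np, ⋂ j ∈ Nm, {ξ : Fin N → ℝ | ξ i - ξ j ≤ C i j} := by
      ext ξ; simp [F]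
    rw [this]
    refine isClosed_biInter fun i _ => isClosed_biInter fun j _ => ?_
    exact isClosed_le (by fun_prop) continuous_const
  have hcomp : IsCompact (F ∩ Set.Icc (fun _ => -(2 * B)) (fun _ => 2 * B)) :=
    isCompact_Icc.inter_left hFc
  have h0mem : (0 : Fin N → ℝ) ∈ F ∩ Set.Icc (fun _ => -(2 * B)) (fun _ => 2 * B) := by
    refine ⟨fun i _ j _ => by simpa using hC i j, fun k => ?_, fun k => ?_⟩ <;>
      simp only [Pi.zero_apply] <;> linarith
  obtain ⟨ξ, hξ, hmax⟩ := hcomp.exists_isMaxOn ⟨0, h0mem⟩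
    (f := fun ξ : Fin N → ℝ => ∑ k, a k * ξ k) (by fun_prop)
  refine ⟨ξ, hξ.1, fun ξ' hξ' => ?_⟩
  rcases lt_or_ge (∑ k, a k * ξ' k) 0 with hneg | hnn
  · have := hmax h0mem
    simp at this
    linarith
  -- bound on differences
  have hpair := ot_pair Np Nm a P0 hr hc ξ'
  rw [hobj] at hpair
  have hslack : ∑ i ∈ Np, ∑ j ∈ Nm, (C i j - (ξ' i - ξ' j)) * P0 i j ≤ V := by
    have : ∑ i ∈ Np, ∑ j ∈ Nm, (C i j - (ξ' i - ξ' j)) * P0 i j =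
        V - ∑ i ∈ Np, ∑ j ∈ Nm, (ξ' i - ξ' j) * P0 i j := by
      rw [hV, ← Finset.sum_sub_distrib]
      refine Finset.sum_congr rfl fun i _ => ?_
      rw [← Finset.sum_sub_distrib]
      exact Finset.sum_congr rfl fun j _ => by ring
    rw [this, ← hpair]; linarith
  have hst : ∀ i ∈ Np, ∀ j ∈ Nm, 0 ≤ (C i j - (ξ' i - ξ' j)) * P0 i j := fun i hi j hj =>
    mul_nonneg (sub_nonneg.2 (hξ' i hi j hj)) (hP0 i hi j hj).le
  have hdiff : ∀ i ∈ Np, ∀ j ∈ Nm, |ξ' i - ξ' j| ≤ B := by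
    intro i hi j hj
    have h1 : (C i j - (ξ' i - ξ' j)) * P0 i j ≤ V :=
      ((Finset.single_le_sum (f := fun j => (C i j - (ξ' i - ξ' j)) * P0 i j)
        (fun j hj => hst i hi j hj) hj).trans
      (Finset.single_le_sum (f := fun i => ∑ j ∈ Nm, (C i j - (ξ' i - ξ' j)) * P0 i j)
        (fun i hi => Finset.sum_nonneg fun j hj => hst i hi j hj) hi)).trans hslack
    rw [← le_div_iff₀ (hP0 i hi j hj)] at h1
    have h2 := hBle i hi j hj
    have h3 := hξ' i hi j hj
    have h4 := hC i j
    have h5 : 0 ≤ V / P0 i j := div_nonneg hV0 (hP0 i hi j hj).le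
    rw [abs_le]; constructor <;> linarith
  let ζ : Fin N → ℝ := fun k => if k ∈ Np ∪ Nm then ξ' k - ξ' j0 else 0
  have hζ : ζ ∈ F ∩ Set.Icc (fun _ => -(2 * B)) (fun _ => 2 * B) := by
    have hb : ∀ k, |ζ k| ≤ 2 * B := by
      intro k
      simp only [ζ]
      split_ifs with hk
      · rcases Finset.mem_union.1 hk with hk | hk
        · exact (hdiff k hk j0 hj0).trans (by linarith)
        · have h1 := abs_le.1 (hdiff i0 hi0 k hk)
          have h2 := abs_le.1 (hdiff i0 hi0 j0 hj0)
          rw [abs_le]; constructor <;> linarith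
      · simpa using hB0
    refine ⟨fun i hi j hj => ?_, fun k => (abs_le.1 (hb k)).1, fun k => (abs_le.1 (hb k)).2⟩
    have := hξ' i hi j hj
    simp only [ζ, Finset.mem_union, hi, hj, true_or, or_true, if_true]
    linarith
  have h1 : ∑ k, a k * ζ k = ∑ k, a k * ξ' k := by
    have : ∀ k, a k * ζ k = a k * ξ' k - a k * ξ' j0 := by
      intro k
      simp only [ζ]
      split_ifs with hk
      · ring
      · simp only [Finset.mem_union, hp, hm, not_or, not_lt] at hk
        rw [le_antisymm hk.1 hk.2]; ring
    simp only [this]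
    rw [Finset.sum_sub_distrib, ← Finset.sum_mul, ha]; ring
  rw [← h1]
  exact hmax hζ

/-- Discrete optimal transport duality with attainment: for nonnegative costs `C` and a
signed weight vector `a` with zero total mass, with `N⁺ = {i : aᵢ > 0}` and
`N⁻ = {j : aⱼ < 0}`, there exist a dual (Kantorovich) potential `ξ` and a transport plan
`P`, both feasible, whose objective values agree; `ξ` maximises the dual objective over
all feasible potentials and `P` minimises the transport cost over all feasible plans. -/
theorem discrete_ot_duality
    (N : ℕ) (C : Fin N → Fin N → ℝ) (hC : ∀ i j, 0 ≤ C i j)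
    (a : Fin N → ℝ) (ha : ∑ i, a i = 0)
    (Np Nm : Finset (Fin N))
    (hNp : Np = Finset.univ.filter fun i => 0 < a i)
    (hNm : Nm = Finset.univ.filter fun j => a j < 0) :
    ∃ ξ : Fin N → ℝ, ∃ P : Fin N → Fin N → ℝ,
      (∀ i ∈ Np, ∀ j ∈ Nm, ξ i - ξ j ≤ C i j) ∧
      (∀ i ∈ Np, ∀ j ∈ Nm, 0 ≤ P i j) ∧
      (∀ i ∈ Np, ∑ j ∈ Nm, P i j = a i) ∧
      (∀ j ∈ Nm, ∑ i ∈ Np, P i j = -a j) ∧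
      ((∑ i ∈ Np, a i * ξ i + ∑ j ∈ Nm, a j * ξ j) =
        ∑ i ∈ Np, ∑ j ∈ Nm, C i j * P i j) ∧
      (∀ ξ' : Fin N → ℝ, (∀ i ∈ Np, ∀ j ∈ Nm, ξ' i - ξ' j ≤ C i j) →
        (∑ i ∈ Np, a i * ξ' i + ∑ j ∈ Nm, a j * ξ' j) ≤
          ∑ i ∈ Np, a i * ξ i + ∑ j ∈ Nm, a j * ξ j) ∧
      (∀ P' : Fin N → Fin N → ℝ, (∀ i ∈ Np, ∀ j ∈ Nm, 0 ≤ P' i j) →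
        (∀ i ∈ Np, ∑ j ∈ Nm, P' i j = a i) →
        (∀ j ∈ Nm, ∑ i ∈ Np, P' i j = -a j) →
        (∑ i ∈ Np, ∑ j ∈ Nm, C i j * P i j) ≤
          ∑ i ∈ Np, ∑ j ∈ Nm, C i j * P' i j) := by
  classical
  have hp : ∀ i, i ∈ Np ↔ 0 < a i := by simp [hNp]
  have hm : ∀ i, i ∈ Nm ↔ a i < 0 := by simp [hNm]
  have hd : Disjoint Np Nm := by
    rw [Finset.disjoint_left]
    intro i h1 h2
    exact lt_asymm ((hp i).1 h1) ((hm i).1 h2)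
  have hobj : ∀ ξ : Fin N → ℝ,
      ∑ i ∈ Np, a i * ξ i + ∑ j ∈ Nm, a j * ξ j = ∑ k, a k * ξ k := by
    intro ξ
    rw [← Finset.sum_union hd]
    refine Finset.sum_subset (Finset.subset_univ _) fun k _ hk => ?_
    simp only [Finset.mem_union, hp, hm, not_or, not_lt] at hk
    rw [le_antisymm hk.1 hk.2, zero_mul]
  obtain ⟨ξ, hξ, hmax⟩ := ot_dual_max C hC a ha Np Nm hp hm hobj
  obtain ⟨P, hP0, hPT, hPa⟩ := ot_farkas Np Nm hd
    (fun i j => i ∈ Np ∧ j ∈ Nm ∧ ξ i - ξ j = C i j) (fun i j h => ⟨h.1, h.2.1⟩) a (by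
      intro η hη
      by_contra hpos
      push Not at hpos
      have hev : ∀ᶠ t : ℝ in nhdsWithin 0 (Set.Ioi 0),
          ∀ i j, i ∈ Np → j ∈ Nm → (ξ i + t * η i) - (ξ j + t * η j) ≤ C i j := by
        rw [Filter.eventually_all]; intro i
        rw [Filter.eventually_all]; intro j
        by_cases hij : i ∈ Np ∧ j ∈ Nm
        · rcases (hξ i hij.1 j hij.2).eq_or_lt with h | h
          · filter_upwards [self_mem_nhdsWithin] with t ht _ _
            have := hη i j ⟨hij.1, hij.2, h⟩
            have := mul_nonpos_of_nonneg_of_nonpos (le_of_lt ht) this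
            linarith
          · have hcont : Continuous fun t : ℝ => (ξ i + t * η i) - (ξ j + t * η j) := by fun_prop
            have h' : (ξ i + 0 * η i) - (ξ j + 0 * η j) < C i j := by simpa using h
            have := hcont.continuousAt.eventually_lt (continuousAt_const (y := C i j)) h'
            filter_upwards [nhdsWithin_le_nhds this] with t ht _ _
            exact ht.le
        · exact Filter.Eventually.of_forall fun t hi hj => absurd ⟨hi, hj⟩ hij
      obtain ⟨t, ht, htpos⟩ := (hev.and self_mem_nhdsWithin).exists
      have h1 := hmax (fun k => ξ k + t * η k) fun i hi j hj => ht i j hi hj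
      have h2 : ∑ k, a k * (ξ k + t * η k) = ∑ k, a k * ξ k + t * ∑ k, a k * η k := by
        rw [Finset.mul_sum, ← Finset.sum_add_distrib]
        exact Finset.sum_congr rfl fun k _ => by ring
      have h3 : 0 < t * ∑ k, a k * η k := mul_pos htpos hpos
      linarith)
  have hrow : ∀ i ∈ Np, ∑ j ∈ Nm, P i j = a i := by
    intro i hi
    rw [← hPa i, Finset.sum_eq_zero (f := fun i' => P i' i), sub_zero]
    · exact Finset.sum_subset (Finset.subset_univ _) fun j _ hj => hPT i j fun h => hj h.2.1
    · exact fun i' _ => hPT i' i fun h => Finset.disjoint_left.mp hd hi h.2.1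
  have hcol : ∀ j ∈ Nm, ∑ i ∈ Np, P i j = -a j := by
    intro j hj
    rw [← hPa j, Finset.sum_eq_zero (f := fun j' => P j j'), zero_sub, neg_neg]
    · exact Finset.sum_subset (Finset.subset_univ _) fun i _ hi => hPT i j fun h => hi h.1
    · exact fun j' _ => hPT j j' fun h => Finset.disjoint_left.mp hd h.1 hj
  have heq : (∑ i ∈ Np, a i * ξ i + ∑ j ∈ Nm, a j * ξ j) =
      ∑ i ∈ Np, ∑ j ∈ Nm, C i j * P i j := by
    rw [ot_pair Np Nm a P hrow hcol ξ]
    refine Finset.sum_congr rfl fun i hi => Finset.sum_congr rfl fun j hj => ?_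
    by_cases h : ξ i - ξ j = C i j
    · rw [h]
    · rw [hPT i j fun h' => h h'.2.2]; simp
  refine ⟨ξ, P, hξ, fun i _ j _ => hP0 i j, hrow, hcol, heq, ?_, ?_⟩
  · intro ξ' hξ'
    rw [hobj, hobj]
    exact hmax ξ' hξ'
  · intro P' h0 h1 h2
    rw [← heq, ot_pair Np Nm a P' h1 h2 ξ]
    exact Finset.sum_le_sum fun i hi => Finset.sum_le_sum fun j hj =>
      mul_le_mul_of_nonneg_right (hξ i hi j hj) (h0 i hi j hj)
end
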